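/- Let G be a finite non-solvable group such that the number i₂(G) of elements of G of order 2 satisfies i₂(G) ≤ |G|/20. Then o(G) ≥ 71/20. -/

import Mathlib

/-- The average element order `o(G) = ψ(G)/|G|` of a finite group `G`,
where `ψ(G) = ∑_{x ∈ G} |x|` is the sum of the orders of all elements of `G`. -/
noncomputable def avgOrder (G : Type*) [Group G] [Fintype G] : ℚ :=
  (∑ x : G, (orderOf x : ℚ)) / (Fintype.card G : ℚ)

/-- `i₂(G)`: the number of elements of order exactly 2 in `G`. -/
noncomputable def numOrderTwo (G : Type*) [Group G] [Fintype G] : ℕ :=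
  (Finset.univ.filter fun g : G => orderOf g = 2).card

/-!
Weight each `g` by `4 - |g|`, except that involutions get weight zero. The weights add up to
`4|G| - ψ(G) - 2 i₂(G)`, and only the identity (weight three) and the elements of order three
(weight one) have positive weight. It suffices that a group of total weight exceeding `7|G|/20` is
solvable. Let `P` be a Sylow `3`-subgroup.

* If `|P| ≤ 3`, either `|G|` has no prime factor other than `2` and `3`, or counting elements of
  order three forces `P` to be its own normalizer; then `P` acts without fixed points on a normal
  complement, on which `a * φ a * φ (φ a) = 1` makes conjugates commute.
* If `|P| ≥ 9`, counting yields an element `x` of order three in a unique Sylow subgroup, which we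
  may take to be `P`. Either `P` has only two elements of order three and counting suffices, or `x`
  lies in an elementary abelian `E ≤ P` of order nine. Viewing a coset `E * y` as an affine plane
  over `𝔽₃`, relations between the few possible orders show that a coset of weight at least three
  consists of elements of order three generating a `3`-group together with `E`, so it lies in `P`.
  Hence the weight is at most about `2|G|/9 + 7|P|/9`, so `P` has index at most seven.
-/

section PowTwenty

variable {G : Type*} [Group G] {a g h : G}

lemma pow_three_pow_seven_of_pow_twenty (hg : g ^ 20 = 1) : (g ^ 3) ^ 7 = g := by
  rw [← pow_mul, show 3 * 7 = 20 + 1 from rfl, pow_succ, hg, one_mul]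

lemma commute_of_commute_pow_three (hg : g ^ 20 = 1) (hag : Commute a (g ^ 3)) : Commute a g := by
  simpa only [pow_three_pow_seven_of_pow_twenty hg] using hag.pow_right 7

lemma eq_of_pow_three_eq (hg : g ^ 20 = 1) (hh : h ^ 20 = 1) (hgh : g ^ 3 = h ^ 3) : g = h := by
  rw [← pow_three_pow_seven_of_pow_twenty hg, hgh, pow_three_pow_seven_of_pow_twenty hh]

lemma eq_one_of_pow_three_of_pow_twenty (h₃ : g ^ 3 = 1) (h₂₀ : g ^ 20 = 1) : g = 1 :=
  eq_of_pow_three_eq h₂₀ (one_pow 20) (h₃.trans (one_pow 3).symm)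

end PowTwenty

section CubeLine

variable {G : Type*} [Group G] {u x y z : G}

lemma mul_pow_three_eq_conj (z w : G) :
    (z * w) ^ 3 = z * (w * z * w⁻¹) * (w ^ 2 * z * (w ^ 2)⁻¹) * w ^ 3 := by
  simp [pow_succ, mul_assoc]

lemma mul_pow_three_eq_conj_of_pow_three {w : G} (hw : w ^ 3 = 1) (z : G) :
    (z * w) ^ 3 = z * (w * z * w⁻¹) * (w⁻¹ * z * w) := by
  have hw_sq : w ^ 2 = w⁻¹ := eq_inv_of_mul_eq_one_left (by rw [← pow_succ, hw])
  rw [mul_pow_three_eq_conj, hw, hw_sq, inv_inv, mul_one]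

lemma mul_pow_four_eq_conj_of_pow_four {w : G} (hw : w ^ 4 = 1) (z : G) :
    (z * w) ^ 4 = z * (w * z * w⁻¹) * (w⁻¹ * (w⁻¹ * z * w) * w) * (w⁻¹ * z * w) := by
  have hw_sq : w⁻¹ * w⁻¹ = w * w := by
    rw [← mul_inv_rev]
    exact inv_eq_of_mul_eq_one_right (by rw [← hw]; simp [pow_succ, mul_assoc])
  calc (z * w) ^ 4 = z * (w * z * w⁻¹) * (w * w * z * w) * (z * w) := by
        simp [pow_succ, mul_assoc]
    _ = _ := by rw [← hw_sq]; group

/-- The coset `{y, z * y, z ^ 2 * y}` of a subgroup `⟨z⟩` of order three consists of elements whose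
cube is trivial. Such cosets are the lines of the affine plane `E * y` over `𝔽₃`, where `E ∋ z` is
elementary abelian of order nine. -/
structure IsCubeLine (z y : G) : Prop where
  pow_three : y ^ 3 = 1
  mul_pow_three : (z * y) ^ 3 = 1
  sq_mul_pow_three : (z ^ 2 * y) ^ 3 = 1

namespace IsCubeLine

lemma mul_conj_mul_conj_inv (hL : IsCubeLine z y) :
    z * (y * z * y⁻¹) * (y⁻¹ * z * y) = 1 := by
  rw [← mul_pow_three_eq_conj_of_pow_three hL.pow_three, hL.mul_pow_three]

lemma conj_inv_eq (hL : IsCubeLine z y) : y⁻¹ * z * y = (z * (y * z * y⁻¹))⁻¹ :=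
  eq_inv_of_mul_eq_one_right hL.mul_conj_mul_conj_inv

lemma commute_conj (hL : IsCubeLine z y) : Commute z (y * z * y⁻¹) := by
  have hsq := hL.sq_mul_pow_three
  rw [mul_pow_three_eq_conj_of_pow_three hL.pow_three, ← conj_pow,
    show y⁻¹ * z ^ 2 * y = (y⁻¹ * z * y) ^ 2 by simp [pow_two, mul_assoc], hL.conj_inv_eq] at hsq
  generalize y * z * y⁻¹ = c at hsq ⊢
  rw [← commutatorElement_eq_one_iff_commute, commutatorElement_def]
  calc z * c * z⁻¹ * c⁻¹ = z⁻¹ * (z ^ 2 * c ^ 2 * (z * c)⁻¹ ^ 2) * z := by simp [pow_two, mul_assoc]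
    _ = 1 := by rw [hsq, mul_one, inv_mul_cancel]

lemma commute_conj_inv (hL : IsCubeLine z y) : Commute z (y⁻¹ * z * y) := by
  rw [hL.conj_inv_eq]
  exact ((Commute.refl z).mul_right hL.commute_conj).inv_right

lemma mul_left_iff (hz : z ^ 3 = 1) : IsCubeLine z (z * y) ↔ IsCubeLine z y := by
  have hzzy : z * (z * y) = z ^ 2 * y := by rw [pow_two, mul_assoc]
  have hzzzy : z ^ 2 * (z * y) = y := by rw [← mul_assoc, ← pow_succ, hz, one_mul]
  exact ⟨fun ⟨h₀, h₁, h₂⟩ ↦ ⟨hzzzy ▸ h₂, h₀, hzzy ▸ h₁⟩,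
    fun ⟨h₀, h₁, h₂⟩ ↦ ⟨h₁, hzzy.symm ▸ h₂, hzzzy.symm ▸ h₀⟩⟩

lemma sq_left_iff (hz : z ^ 3 = 1) : IsCubeLine (z ^ 2) y ↔ IsCubeLine z y := by
  have hz_four : (z ^ 2) ^ 2 = z := by rw [← pow_mul, pow_succ z 3, hz, one_mul]
  exact ⟨fun ⟨h₀, h₁, h₂⟩ ↦ ⟨h₀, hz_four ▸ h₂, h₁⟩, fun ⟨h₀, h₁, h₂⟩ ↦ ⟨h₀, h₂, hz_four.symm ▸ h₁⟩⟩

section Parallel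

variable (hL : IsCubeLine z y) (hxz : Commute x z)
include hL hxz

lemma commute_parallel_conj : Commute z (x * y * z * (x * y)⁻¹) := by
  have hconj := (Commute.conj_iff x).mpr hL.commute_conj
  rwa [hxz.eq, mul_inv_cancel_right,
    show x * (y * z * y⁻¹) * x⁻¹ = x * y * z * (x * y)⁻¹ by group] at hconj

omit hL in
lemma parallel_conj_inv : (x * y)⁻¹ * z * (x * y) = y⁻¹ * z * y := by
  have hx : x⁻¹ * z * x = z := by rw [mul_assoc, ← hxz.eq, inv_mul_cancel_left]
  calc (x * y)⁻¹ * z * (x * y) = y⁻¹ * (x⁻¹ * z * x) * y := by group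
    _ = y⁻¹ * z * y := by rw [hx]

lemma eq_one_of_parallel (hz : z ^ 3 = 1) (hw : (x * y) ^ 3 = 1) (hzw : (z * (x * y)) ^ 20 = 1) :
    z * (x * y) = 1 := by
  have hcomm_cube : Commute z ((z * (x * y)) ^ 3) := by
    rw [mul_pow_three_eq_conj_of_pow_three hw, parallel_conj_inv hxz]
    exact ((Commute.refl z).mul_right (hL.commute_parallel_conj hxz)).mul_right hL.commute_conj_inv
  have hcomm : Commute z (x * y) := by
    simpa using (Commute.refl z).inv_right.mul_right (commute_of_commute_pow_three hzw hcomm_cube)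
  exact eq_one_of_pow_three_of_pow_twenty (by rw [hcomm.mul_pow, hz, hw, one_mul]) hzw

lemma of_parallel (hw : (x * y) ^ 3 = 1) (hzw : (z * (x * y)) ^ 3 = 1) :
    IsCubeLine z (x * y) where
  pow_three := hw
  mul_pow_three := hzw
  sq_mul_pow_three := by
    have hprod := hzw
    rw [mul_pow_three_eq_conj_of_pow_three hw] at hprod
    rw [mul_pow_three_eq_conj_of_pow_three hw, ← conj_pow,
      show (x * y)⁻¹ * z ^ 2 * (x * y) = ((x * y)⁻¹ * z * (x * y)) ^ 2 by
        simp [pow_two, mul_assoc],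
      ← (hL.commute_parallel_conj hxz).mul_pow, eq_inv_of_mul_eq_one_right hprod, inv_pow,
      mul_inv_cancel]

lemma commute_conj_of_parallel (hLx : IsCubeLine z (x * y)) : Commute x (y * z * y⁻¹) := by
  have hconj : x * (y * z * y⁻¹) * x⁻¹ = y * z * y⁻¹ := by
    have h := hLx.mul_conj_mul_conj_inv.trans hL.mul_conj_mul_conj_inv.symm
    rw [parallel_conj_inv hxz] at h
    simpa only [mul_inv_rev, mul_assoc] using mul_left_cancel (mul_right_cancel h)
  exact mul_inv_eq_iff_eq_mul.mp hconj

end Parallel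

lemma pow_mul_pow_three_eq (hL : IsCubeLine z y) (huz : Commute u z)
    (huc : Commute u (y * z * y⁻¹)) (k : ℕ) : (z ^ k * (u * y)) ^ 3 = (u * y) ^ 3 := by
  have hconj : u * y * z * (u * y)⁻¹ = y * z * y⁻¹ := by
    simpa only [mul_inv_rev, mul_assoc] using mul_inv_eq_iff_eq_mul.mpr huc.eq
  have hconj_sq : (u * y) ^ 2 * z * ((u * y) ^ 2)⁻¹ = (z * (y * z * y⁻¹))⁻¹ := by
    have hud : Commute u (y⁻¹ * z * y) := hL.conj_inv_eq ▸ (huz.mul_right huc).inv_right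
    have hy : y ^ 2 = y⁻¹ := eq_inv_of_mul_eq_one_left (by rw [← pow_succ, hL.pow_three])
    calc (u * y) ^ 2 * z * ((u * y) ^ 2)⁻¹ = u * y * (u * y * z * (u * y)⁻¹) * (u * y)⁻¹ := by
          simp [pow_two, mul_assoc]
      _ = u * (y ^ 2 * z * (y ^ 2)⁻¹) * u⁻¹ := by rw [hconj]; simp [pow_two, mul_assoc]
      _ = y⁻¹ * z * y := by rw [hy, inv_inv, mul_inv_eq_iff_eq_mul.mpr hud.eq]
      _ = _ := hL.conj_inv_eq
  rw [mul_pow_three_eq_conj, ← conj_pow, ← conj_pow, hconj, hconj_sq, ← hL.commute_conj.mul_pow,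
    inv_pow, mul_inv_cancel, one_mul]

lemma conj_inv_parallel_conj (hL : IsCubeLine z y) (hxz : Commute x z) (hw : (x * y) ^ 4 = 1)
    (hzw : (z * (x * y)) ^ 4 = 1) :
    y⁻¹ * (x⁻¹ * (y * z * y⁻¹) * x) * y = z * (x * (y * z * y⁻¹) * x⁻¹) := by
  have hprod := hzw
  rw [mul_pow_four_eq_conj_of_pow_four hw, parallel_conj_inv hxz, hL.conj_inv_eq] at hprod
  have hx : x⁻¹ * z * x = z := by rw [mul_assoc, ← hxz.eq, inv_mul_cancel_left]
  have hinv : (x * y)⁻¹ * (z * (y * z * y⁻¹))⁻¹ * (x * y) =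
      (y⁻¹ * (x⁻¹ * z * x) * y * (y⁻¹ * (x⁻¹ * (y * z * y⁻¹) * x) * y))⁻¹ := by group
  rw [hinv, hx, hL.conj_inv_eq, mul_inv_rev (_)⁻¹ (_ * y), inv_inv, mul_assoc _ (_ * _) (_)⁻¹,
    mul_inv_cancel_right, mul_inv_eq_one] at hprod
  rw [← hprod]
  group

section FourTorsionParallels

variable (hL : IsCubeLine z y) (hxz : Commute x z) (h₁ : (x * y) ^ 4 = 1)
  (h₂ : (z * (x * y)) ^ 4 = 1) (h₃ : (x⁻¹ * y) ^ 4 = 1) (h₄ : (z * (x⁻¹ * y)) ^ 4 = 1)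
include hL hxz h₁ h₂ h₃ h₄

lemma inv_conj_eq_conj_of_parallel_pow_four :
    x⁻¹ * (y * z * y⁻¹) * x = x * (y * z * y⁻¹) * x⁻¹ := by
  have hp := hL.conj_inv_parallel_conj hxz h₁ h₂
  have hq := hL.conj_inv_parallel_conj hxz.inv_left h₃ h₄
  rw [inv_inv] at hq
  set c := y * z * y⁻¹ with hc
  have hc_conj : y⁻¹ * (y⁻¹ * z * y) * y = c := by
    have hy : y⁻¹ * y⁻¹ = y := by
      rw [← mul_inv_rev, ← pow_two]
      exact inv_eq_of_mul_eq_one_right (by rw [← pow_succ, hL.pow_three])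
    calc y⁻¹ * (y⁻¹ * z * y) * y = y⁻¹ * y⁻¹ * z * (y⁻¹ * y⁻¹)⁻¹ := by simp [mul_assoc]
      _ = c := by rw [hy]
  -- Conjugate three times by `y`, whose cube is trivial.
  calc x⁻¹ * c * x = (y ^ 3)⁻¹ * (x⁻¹ * c * x) * y ^ 3 := by rw [hL.pow_three]; group
    _ = y⁻¹ * (y⁻¹ * (y⁻¹ * (x⁻¹ * c * x) * y) * y) * y := by simp [pow_succ, mul_assoc]
    _ = y⁻¹ * (y⁻¹ * z * y * (y⁻¹ * (x * c * x⁻¹) * y)) * y := by rw [hp]; group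
    _ = y⁻¹ * (y⁻¹ * z * y) * y * (y⁻¹ * z * y) * (y⁻¹ * (x⁻¹ * c * x) * y) := by rw [hq]; group
    _ = c * (y⁻¹ * z * y) * z * (x * c * x⁻¹) := by rw [hc_conj, hp]; group
    _ = x * c * x⁻¹ := by rw [hL.conj_inv_eq, ← hc]; group

lemma eq_one_of_parallel_pow_four (hx : x ^ 3 = 1) : z = 1 := by
  have hp := hL.conj_inv_parallel_conj hxz h₁ h₂
  have hpq := hL.inv_conj_eq_conj_of_parallel_pow_four hxz h₁ h₂ h₃ h₄
  set c := y * z * y⁻¹ with hc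
  have hxc : Commute x c := by
    have hx_sq : Commute (x ^ 2) c := by
      rw [commute_iff_eq]
      calc x ^ 2 * c = x * (x * c * x⁻¹) * x := by simp [pow_two, mul_assoc]
        _ = c * x ^ 2 := by rw [← hpq]; simp [pow_two, mul_assoc]
    have hx_four := hx_sq.pow_left 2
    rwa [← pow_mul, pow_succ x 3, hx, one_mul] at hx_four
  have hz : z = z * c := by
    calc z = y⁻¹ * c * y := by rw [hc]; group
      _ = y⁻¹ * (x⁻¹ * c * x) * y := by rw [mul_assoc x⁻¹, ← hxc.eq, inv_mul_cancel_left]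
      _ = z * c := by rw [hp, hxc.eq, mul_inv_cancel_right]
  exact conj_eq_one_iff.mp (hc.symm.trans (left_eq_mul.mp hz))

end FourTorsionParallels

end IsCubeLine

section TwoPoints

lemma commute_of_mul_pow_three (hz : z ^ 3 = 1) (h₁ : (z * y) ^ 3 = 1) (h₂ : (z ^ 2 * y) ^ 3 = 1) :
    Commute y (z * y * z⁻¹) ∧ Commute y (z⁻¹ * y * z) ∧
      y * (z * y * z⁻¹) * (z⁻¹ * y * z) = 1 := by
  have hz_sq : z ^ 2 = z⁻¹ := eq_inv_of_mul_eq_one_left (by rw [← pow_succ, hz])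
  have hz_inv_sq : z⁻¹ ^ 2 = z := by rw [inv_pow, hz_sq, inv_inv]
  have hprod₁ : z * y * z⁻¹ * (z⁻¹ * y * z) * y = 1 := by
    rw [← h₁]
    calc _ = z * y * z⁻¹ ^ 2 * y * z * y := by simp [pow_two, mul_assoc]
      _ = _ := by rw [hz_inv_sq]; simp [pow_succ, mul_assoc]
  have hprod₂ : z⁻¹ * y * z * (z * y * z⁻¹) * y = 1 := by
    rw [← h₂, hz_sq]
    calc _ = z⁻¹ * y * z ^ 2 * y * z⁻¹ * y := by simp [pow_two, mul_assoc]
      _ = _ := by rw [hz_sq]; simp [pow_succ, mul_assoc]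
  generalize z * y * z⁻¹ = a, z⁻¹ * y * z = b at *
  have hy : y = (a * b)⁻¹ := eq_inv_of_mul_eq_one_right hprod₁
  have hab : Commute a b := mul_right_cancel (hprod₁.trans hprod₂.symm)
  subst hy
  exact ⟨((Commute.refl a).mul_left hab.symm).inv_left, (hab.mul_left (Commute.refl b)).inv_left,
    by rw [mul_assoc, inv_mul_cancel]⟩

lemma eq_one_of_two_lines (hx : x ^ 3 = 1) (hz : z ^ 3 = 1) (hxz : Commute x z)
    (h₁ : (z * y) ^ 3 = 1) (h₂ : (z ^ 2 * y) ^ 3 = 1)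
    (h₃ : (z * (x * y)) ^ 3 = 1) (h₄ : (z ^ 2 * (x * y)) ^ 3 = 1)
    (hy : y ^ 20 = 1) (hxy : (x * y) ^ 20 = 1) : x = 1 := by
  obtain ⟨hcomm₁, hcomm₂, hprod⟩ := commute_of_mul_pow_three hz h₁ h₂
  obtain ⟨hcomm₃, hcomm₄, -⟩ := commute_of_mul_pow_three hz h₃ h₄
  have hconj₃ : z * (x * y) * z⁻¹ = x * (z * y * z⁻¹) := by rw [← mul_assoc z, ← hxz.eq]; group
  have hconj₄ : z⁻¹ * (x * y) * z = x * (z⁻¹ * y * z) := by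
    rw [← mul_assoc z⁻¹, ← hxz.inv_right.eq]; group
  rw [hconj₃] at hcomm₃
  rw [hconj₄] at hcomm₄
  generalize z * y * z⁻¹ = a, z⁻¹ * y * z = b at *
  have commute_div : ∀ c, Commute y c → Commute (x * y) (x * c) → Commute x (y * c⁻¹) := by
    intro c hyc hxyc
    have hleft : x * y * (x * c)⁻¹ = x * (y * c⁻¹) * x⁻¹ := by group
    have hright : (x * c)⁻¹ * (x * y) = c⁻¹ * y := by group
    have := hxyc.inv_right.eq
    rw [hleft, hright, ← hyc.inv_right.eq] at this
    exact mul_inv_eq_iff_eq_mul.mp this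
  -- The conjugates `y`, `a`, `b` multiply to one, so `y ^ 3` is a product of quotients of them.
  have hcube : y ^ 3 = y * a⁻¹ * (y * b⁻¹) := by
    rw [hcomm₁.eq, mul_assoc] at hprod
    have hy_eq : y = a⁻¹ * b⁻¹ := eq_mul_inv_of_mul_eq (eq_inv_of_mul_eq_one_right hprod)
    calc y ^ 3 = y * (y * (a⁻¹ * b⁻¹)) := by rw [← hy_eq, pow_three]
      _ = y * (a⁻¹ * y * b⁻¹) := by rw [← mul_assoc y a⁻¹, hcomm₁.inv_right.eq]
      _ = y * a⁻¹ * (y * b⁻¹) := by simp only [mul_assoc]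
  have hxy_comm : Commute x y := commute_of_commute_pow_three hy
    (hcube ▸ (commute_div a hcomm₁ hcomm₃).mul_right (commute_div b hcomm₂ hcomm₄))
  rw [hxy_comm.mul_pow, hy, mul_one] at hxy
  exact eq_one_of_pow_three_of_pow_twenty hx hxy

lemma conj_mul_inv_conj_mul_of_pow_three (hx : x ^ 3 = 1) (hxy : (x * y) ^ 3 = 1) :
    x * y * x⁻¹ * (x⁻¹ * y * x) * y = 1 := by
  have hx_sq : x⁻¹ * x⁻¹ = x := by
    rw [← mul_inv_rev, ← pow_two]
    exact inv_eq_of_mul_eq_one_right (by rw [← pow_succ, hx])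
  rw [← hxy]
  calc x * y * x⁻¹ * (x⁻¹ * y * x) * y = x * y * (x⁻¹ * x⁻¹) * y * x * y := by group
    _ = (x * y) ^ 3 := by rw [hx_sq]; simp [pow_succ, mul_assoc]

lemma mul_conj_mul_inv_conj_mul_of_pow_four (hx : x ^ 3 = 1) (hxy : (x * y) ^ 4 = 1) :
    y * (x * y * x⁻¹) * (x⁻¹ * y * x) * y = x⁻¹ := by
  have hx_sq : x⁻¹ * x⁻¹ = x := by
    rw [← mul_inv_rev, ← pow_two]
    exact inv_eq_of_mul_eq_one_right (by rw [← pow_succ, hx])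
  refine eq_inv_of_mul_eq_one_right ?_
  rw [← hxy]
  calc x * (y * (x * y * x⁻¹) * (x⁻¹ * y * x) * y)
      = x * y * (x * y) * (x⁻¹ * x⁻¹) * y * x * y := by simp [mul_assoc]
    _ = (x * y) ^ 4 := by rw [hx_sq]; simp [pow_succ, mul_assoc]

lemma inv_mul_sq_eq_sq {a b c : G} (hab : Commute a b) (habc : a * b * c = 1) (hb : b ^ 4 = 1) :
    (a⁻¹ * b) ^ 2 = c ^ 2 := by
  have hb_sq : (b ^ 2)⁻¹ = b ^ 2 := inv_eq_of_mul_eq_one_right (by rw [← pow_add, hb])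
  rw [eq_inv_of_mul_eq_one_right habc, inv_pow, hab.mul_pow, hab.inv_left.mul_pow, mul_inv_rev,
    hb_sq, inv_pow, (hab.pow_pow 2 2).inv_left.eq]

section CommutingOrderThree

variable (hx : x ^ 3 = 1) (hz : z ^ 3 = 1) (hxz : Commute x z)
include hx hz hxz

lemma conj_relations_of_parallel_pow_three (hzxy : (z * (x * y)) ^ 3 = 1) :
    x * (z⁻¹ * y * z) * x⁻¹ * (x⁻¹ * y * x) * (z * y * z⁻¹) = 1 ∧
      x * y * x⁻¹ * (x⁻¹ * (z * y * z⁻¹) * x) * (z⁻¹ * y * z) = 1 := by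
  have hz_inv : z⁻¹ = z * z := inv_eq_of_mul_eq_one_right (by rw [← pow_three, hz])
  have hz_three (g : G) : z * (z * (z * g)) = g := by simp [← mul_assoc, ← pow_three', hz]
  have hprod : x * z * y * (x * z)⁻¹ * ((x * z)⁻¹ * y * (x * z)) * y = 1 := by
    refine conj_mul_inv_conj_mul_of_pow_three ?_ ?_
    · rw [hxz.mul_pow, hx, hz, one_mul]
    · rw [hxz.eq, mul_assoc, hzxy]
  have hzx := hxz.symm.eq
  have hzx_left := hxz.symm.left_comm
  have hzx_inv := hxz.symm.inv_right.eq
  have hzx_inv_left := hxz.symm.inv_right.left_comm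
  constructor
  · calc _ = z * (x * z * y * (x * z)⁻¹ * ((x * z)⁻¹ * y * (x * z)) * y) * z⁻¹ := by
          simp [mul_assoc, hz_inv, hz_three, hzx_left, hzx_inv, hzx_inv_left]
      _ = 1 := by rw [hprod]; group
  · calc _ = z⁻¹ * (x * z * y * (x * z)⁻¹ * ((x * z)⁻¹ * y * (x * z)) * y) * z := by
          simp [mul_assoc, hz_inv, hz_three, hzx, hzx_left, hzx_inv, hzx_inv_left]
      _ = 1 := by rw [hprod]; group

lemma eq_mul_conj_sq_mul_of_parallel (h₁ : (z * (x * y)) ^ 3 = 1) (h₂ : (x * y) ^ 4 = 1)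
    (h₃ : (z ^ 2 * (x * y)) ^ 4 = 1) :
    z = y⁻¹ * (z * y * z⁻¹) * (x * (z⁻¹ * y * z * y⁻¹) ^ 2 * x⁻¹) * (z⁻¹ * y * z)⁻¹ * y := by
  have hx_inv := mul_conj_mul_inv_conj_mul_of_pow_four hx h₂
  have hxz_inv : y * (x * (z⁻¹ * y * z) * x⁻¹) * (x⁻¹ * (z * y * z⁻¹) * x) * y =
      (x * z⁻¹)⁻¹ := by
    have hz_sq : z ^ 2 = z⁻¹ := eq_inv_of_mul_eq_one_left (by rw [← pow_succ, hz])
    rw [← mul_conj_mul_inv_conj_mul_of_pow_four (x := x * z⁻¹) (y := y)]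
    · simp [mul_assoc, hxz.inv_right.eq, hxz.inv_right.left_comm, hxz.inv_left.left_comm]
    · rw [hxz.inv_right.mul_pow, hx, inv_pow, hz, inv_one, one_mul]
    · rw [hxz.inv_right.eq, mul_assoc, ← hz_sq, h₃]
  obtain ⟨hrel₁, hrel₂⟩ := conj_relations_of_parallel_pow_three hx hz hxz h₁
  rw [mul_assoc, mul_eq_one_iff_eq_inv', ← eq_mul_inv_iff_mul_eq] at hrel₁ hrel₂
  rw [hrel₁] at hx_inv
  rw [hrel₂] at hxz_inv
  calc z = (x⁻¹)⁻¹ * (x * z⁻¹)⁻¹ := by rw [hxz.inv_right.eq]; group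
    _ = (y * (x * y * x⁻¹) * ((x * (z⁻¹ * y * z) * x⁻¹)⁻¹ * (z * y * z⁻¹)⁻¹) * y)⁻¹ *
          (y * (x * (z⁻¹ * y * z) * x⁻¹) * ((x * y * x⁻¹)⁻¹ * (z⁻¹ * y * z)⁻¹) * y) := by
        rw [hx_inv, hxz_inv]
    _ = _ := by simp [pow_two, mul_assoc]

section ThreePoints

variable (h₁ : (z * y) ^ 3 = 1) (h₂ : (z ^ 2 * y) ^ 3 = 1) (h₃ : (z * (x * y)) ^ 3 = 1)
  (h₄ : (x * y) ^ 4 = 1) (h₅ : (z ^ 2 * (x * y)) ^ 4 = 1) (hy : y ^ 4 = 1)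
include h₁ h₂ h₃ h₄ h₅ hy

lemma conj_sq_eq_of_three_points : x * (z * y * z⁻¹) ^ 2 * x⁻¹ = (z⁻¹ * y * z) ^ 2 * z := by
  have hz_eq := eq_mul_conj_sq_mul_of_parallel hx hz hxz h₃ h₄ h₅
  obtain ⟨hya, hyb, hprod⟩ := commute_of_mul_pow_three hz h₁ h₂
  have hza : z * y = z * y * z⁻¹ * z := by group
  have hzb : z * (z⁻¹ * y * z) = y * z := by group
  have hb_four : (z⁻¹ * y * z) ^ 4 = 1 := by
    have := conj_pow (i := 4) (a := z⁻¹) (b := y)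
    rwa [inv_inv, hy, mul_one, inv_mul_cancel] at this
  generalize z * y * z⁻¹ = a, z⁻¹ * y * z = b at *
  have hayb : a * y * b = 1 := by rw [← hya.eq, hprod]
  have hyba : y * b * a = 1 := mul_eq_one_comm.mp (by rw [← mul_assoc, hayb])
  have hb_sq : (b * y⁻¹) ^ 2 = a ^ 2 := by
    rw [← hyb.inv_left.eq, inv_mul_sq_eq_sq hyb hyba hb_four]
  rw [hb_sq] at hz_eq
  calc x * a ^ 2 * x⁻¹ = a⁻¹ * y * (y⁻¹ * a * (x * a ^ 2 * x⁻¹) * b⁻¹ * y) * y⁻¹ * b := by group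
    _ = a⁻¹ * y * (z * y⁻¹ * b) := by rw [← hz_eq]; group
    _ = a⁻¹ * y * (a⁻¹ * (a * z) * y⁻¹ * b) := by group
    _ = a⁻¹ * y * (a⁻¹ * (z * b)) := by rw [← hza]; group
    _ = (a⁻¹ * y) ^ 2 * z := by rw [hzb]; simp [pow_two, mul_assoc]
    _ = b ^ 2 * z := by rw [inv_mul_sq_eq_sq hya.symm hayb hy]

lemma eq_one_of_three_points : z = 1 := by
  have hconj := conj_sq_eq_of_three_points hx hz hxz h₁ h₂ h₃ h₄ h₅ hy
  obtain ⟨hya, hyb, hprod⟩ := commute_of_mul_pow_three hz h₁ h₂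
  have ha_four : (z * y * z⁻¹) ^ 4 = 1 := by rw [conj_pow, hy]; group
  have hzb : z * (z⁻¹ * y * z) ^ 2 = y ^ 2 * z := by simp [pow_two, mul_assoc]
  generalize z * y * z⁻¹ = a, z⁻¹ * y * z = b at *
  have hby : b * y = a⁻¹ := by
    rw [← hyb.eq]
    exact eq_inv_of_mul_eq_one_right (by rw [← mul_assoc, ← hya.eq, hprod])
  have hz_sq : z ^ 2 = a ^ 2 := by
    calc z ^ 2 = a ^ 2 * (a⁻¹ ^ 2 * z ^ 2) := by group
      _ = a ^ 2 * (b ^ 2 * (y ^ 2 * z) * z) := by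
          rw [← hby, hyb.symm.mul_pow]; simp [pow_two, mul_assoc]
      _ = a ^ 2 * (x * a ^ 2 * x⁻¹) ^ 2 := by
          rw [← hzb, hconj, pow_two (b ^ 2 * z)]; simp only [mul_assoc]
      _ = a ^ 2 := by rw [conj_pow, ← pow_mul, ha_four]; group
  calc z = z ^ 3 * z := by rw [hz, one_mul]
    _ = (z ^ 2) ^ 2 := by group
    _ = 1 := by rw [hz_sq, ← pow_mul, ha_four]

end ThreePoints

section BasePoint

variable (hy : y ^ 3 = 1) (hzy : (z * y) ^ 3 = 1) (hxy : (x * y) ^ 3 = 1)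
include hy hzy hxy

lemma eq_one_of_parallelogram (hzxy : (z * (x * y)) ^ 3 = 1) (h₁ : (z ^ 2 * y) ^ 20 = 1)
    (h₂ : (z ^ 2 * (x * y)) ^ 20 = 1) : x = 1 := by
  have hz_cube (w : G) : z * (z ^ 2 * w) = w := by rw [← mul_assoc, ← pow_succ', hz, one_mul]
  have hz_four (w : G) : z ^ 2 * (z ^ 2 * w) = z * w := by
    rw [← mul_assoc, ← pow_add, pow_succ z 3, hz, one_mul]
  have hx_left : x * (z ^ 2 * y) = z ^ 2 * (x * y) := (hxz.pow_right 2).left_comm y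
  apply eq_one_of_two_lines (y := z ^ 2 * y) hx hz hxz <;>
    simpa only [hx_left, hz_cube, hz_four]

lemma eq_one_of_triangle (h₁ : (z ^ 2 * y) ^ 4 = 1) (h₂ : (z ^ 2 * (x * y)) ^ 4 = 1)
    (h₃ : (z * (x * y)) ^ 4 = 1) : z = 1 := by
  have hz_cube (w : G) : z * (z ^ 2 * w) = w := by rw [← mul_assoc, ← pow_succ', hz, one_mul]
  have hz_four (w : G) : z ^ 2 * (z ^ 2 * w) = z * w := by
    rw [← mul_assoc, ← pow_add, pow_succ z 3, hz, one_mul]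
  have hx_left : x * (z ^ 2 * y) = z ^ 2 * (x * y) := (hxz.pow_right 2).left_comm y
  apply eq_one_of_three_points (y := z ^ 2 * y) hx hz hxz <;>
    simpa only [hx_left, hz_cube, hz_four]

end BasePoint

end CommutingOrderThree

end TwoPoints

end CubeLine

section OrderWeight

variable {G : Type*} [Group G] {g : G}

/-- The weight `4 - |g|` of a group element, raised to zero on the elements of order two, so that
the weights of a finite group `G` add up to `4|G| - ψ(G) - 2 i₂(G)`. -/
noncomputable def orderWeight (g : G) : ℤ :=
  if orderOf g = 2 then 0 else 4 - orderOf g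

lemma orderWeight_of_pow_three (hg : g ≠ 1) (hg₃ : g ^ 3 = 1) : orderWeight g = 1 := by
  simp [orderWeight, orderOf_eq_prime hg₃ hg]

lemma orderWeight_nonpos [Finite G] (hg₃ : g ^ 3 ≠ 1) : orderWeight g ≤ 0 := by
  have hpos : 0 < orderOf g := orderOf_pos g
  have hne_one : orderOf g ≠ 1 := fun h ↦ hg₃ (by rw [orderOf_eq_one_iff.mp h, one_pow])
  have hne_three : orderOf g ≠ 3 := fun h ↦ hg₃ (h ▸ pow_orderOf_eq_one g)
  unfold orderWeight
  split_ifs <;> lia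

lemma orderWeight_le_one [Finite G] (hg : g ≠ 1) : orderWeight g ≤ 1 := by
  by_cases hg₃ : g ^ 3 = 1
  · exact (orderWeight_of_pow_three hg hg₃).le
  · exact (orderWeight_nonpos hg₃).trans zero_le_one

lemma pow_four_of_orderWeight_eq_zero (hg : orderWeight g = 0) : g ^ 4 = 1 := by
  have horder : orderOf g = 2 ∨ orderOf g = 4 := by
    unfold orderWeight at hg
    grind
  rw [← orderOf_dvd_iff_pow_eq_one]
  rcases horder with h | h <;> norm_num [h]

lemma pow_twenty_of_orderWeight (hlow : -1 ≤ orderWeight g) (hhigh : orderWeight g ≤ 0) :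
    g ^ 20 = 1 := by
  have horder : orderOf g = 2 ∨ orderOf g = 4 ∨ orderOf g = 5 := by
    unfold orderWeight at hlow hhigh
    split_ifs at hlow hhigh <;> lia
  rw [← orderOf_dvd_iff_pow_eq_one]
  rcases horder with h | h | h <;> norm_num [h]

lemma orderWeight_le_of_pow_three_eq [Finite G] {h : G} (hgh : g ≠ h) (hg₃ : g ^ 3 ≠ 1)
    (hcube : g ^ 3 = h ^ 3) : orderWeight g ≤ -2 ∨ orderWeight h ≤ -2 := by
  by_contra! hlow
  exact hgh (eq_of_pow_three_eq (pow_twenty_of_orderWeight (by lia) (orderWeight_nonpos hg₃))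
    (pow_twenty_of_orderWeight (by lia) (orderWeight_nonpos (hcube ▸ hg₃))) hcube)

/-- The total weight of the coset `{y, z * y, z ^ 2 * y}` of a subgroup `⟨z⟩` of order three. -/
noncomputable def lineWeight (z y : G) : ℤ :=
  orderWeight y + orderWeight (z * y) + orderWeight (z ^ 2 * y)

lemma lineWeight_mul_left {z : G} (hz : z ^ 3 = 1) (y : G) :
    lineWeight z (z * y) = lineWeight z y := by
  simp only [lineWeight, ← mul_assoc, ← pow_two, ← pow_succ, hz, one_mul]
  ring

end OrderWeight

section ElementaryAbelian

variable {G : Type*} [Group G]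

lemma disjoint_zpowers_of_prime_orderOf {x z : G} (hx : (orderOf x).Prime)
    (hxz : x ∉ Subgroup.zpowers z) :
    Disjoint (Subgroup.zpowers x) (Subgroup.zpowers z) := by
  rw [Subgroup.disjoint_def]
  rintro _ ⟨k, rfl⟩ hk
  by_contra hne
  have hcop : k.gcd (orderOf x) = 1 := by
    rw [← Int.isCoprime_iff_gcd_eq_one, isCoprime_comm,
      (Nat.prime_iff_prime_int.mp hx).coprime_iff_not_dvd, orderOf_dvd_iff_zpow_eq_one]
    exact hne
  exact hxz (Subgroup.zpowers_le.mpr hk (mem_zpowers_zpow_iff.mpr hcop))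

/-- Elementary abelian subgroups of order nine; they are commutative because their order is the
square of a prime. -/
structure IsElementaryAbelianNine (E : Subgroup G) : Prop where
  card_eq : Nat.card E = 9
  pow_three : ∀ a ∈ E, a ^ 3 = 1

namespace IsElementaryAbelianNine

variable {E : Subgroup G} (hE : IsElementaryAbelianNine E)
include hE

lemma finite : Finite E := Nat.finite_of_card_ne_zero (by simp [hE.card_eq])

lemma commute {a b : G} (ha : a ∈ E) (hb : b ∈ E) : Commute a b := by
  have : Fact (Nat.Prime 3) := ⟨Nat.prime_three⟩
  have := IsPGroup.isMulCommutative_of_card_eq_prime_sq (p := 3) (G := E) hE.card_eq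
  exact congrArg Subtype.val (mul_comm' (⟨a, ha⟩ : E) ⟨b, hb⟩)

lemma bijective_pow_mul_pow {x z : G} (hx : x ∈ E) (hz : z ∈ E) (hz_one : z ≠ 1)
    (hxz : x ∉ Subgroup.zpowers z) :
    Function.Bijective fun p : Fin 3 × Fin 3 ↦
      (⟨z ^ (p.2 : ℕ) * x ^ (p.1 : ℕ), E.mul_mem (E.pow_mem hz _) (E.pow_mem hx _)⟩ : E) := by
  have : Finite E := hE.finite
  have hx_one : x ≠ 1 := fun h ↦ hxz (h ▸ one_mem _)
  have hox : orderOf x = 3 := orderOf_eq_prime (hE.pow_three x hx) hx_one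
  have hoz : orderOf z = 3 := orderOf_eq_prime (hE.pow_three z hz) hz_one
  have hdisj := (disjoint_zpowers_of_prime_orderOf (hox ▸ Nat.prime_three) hxz).symm
  refine (Nat.bijective_iff_injective_and_card _).mpr ⟨?_, by simp [hE.card_eq]⟩
  rintro ⟨i, j⟩ ⟨k, l⟩ h
  have hpair := Subgroup.mul_injective_of_disjoint hdisj
    (a₁ := (⟨_, Subgroup.npow_mem_zpowers z j⟩, ⟨_, Subgroup.npow_mem_zpowers x i⟩))
    (a₂ := (⟨_, Subgroup.npow_mem_zpowers z l⟩, ⟨_, Subgroup.npow_mem_zpowers x k⟩))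
    (congrArg Subtype.val h)
  simp only [Prod.mk.injEq, Subtype.mk.injEq] at hpair
  exact Prod.ext (Fin.ext (pow_injOn_Iio_orderOf (by simp [hox]) (by simp [hox]) hpair.2))
    (Fin.ext (pow_injOn_Iio_orderOf (by simp [hoz]) (by simp [hoz]) hpair.1))

lemma notMem_zpowers_symm {x z : G} (hx : x ∈ E) (hz_one : z ≠ 1)
    (hxz : x ∉ Subgroup.zpowers z) : z ∉ Subgroup.zpowers x := by
  have hx_one : x ≠ 1 := fun h ↦ hxz (h ▸ one_mem _)
  have hx_order : orderOf x = 3 := orderOf_eq_prime (hE.pow_three x hx) hx_one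
  have hdisj := disjoint_zpowers_of_prime_orderOf (hx_order ▸ Nat.prime_three) hxz
  exact fun hzx ↦ hz_one (Subgroup.disjoint_def.mp hdisj hzx (Subgroup.mem_zpowers z))

lemma exists_notMem_zpowers {z : G} (hz : z ∈ E) : ∃ x ∈ E, x ∉ Subgroup.zpowers z := by
  by_contra! hle
  have hdvd : Nat.card E ∣ orderOf z := Nat.card_zpowers z ▸ Subgroup.card_dvd_of_le hle
  rw [hE.card_eq] at hdvd
  exact absurd (hdvd.trans (orderOf_dvd_of_pow_eq_one (hE.pow_three z hz))) (by norm_num)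

end IsElementaryAbelianNine

/-- The total weight of the right coset `E * y`. -/
noncomputable def cosetWeight (E : Subgroup G) [Fintype E] (y : G) : ℤ :=
  ∑ e : E, orderWeight (e * y)

lemma cosetWeight_mul_left {E : Subgroup G} [Fintype E] {u : G} (hu : u ∈ E) (y : G) :
    cosetWeight E (u * y) = cosetWeight E y :=
  Fintype.sum_equiv (Equiv.mulRight (⟨u, hu⟩ : E)) _ _ fun e ↦ by simp [mul_assoc]

lemma IsElementaryAbelianNine.cosetWeight_eq {E : Subgroup G} [Fintype E]
    (hE : IsElementaryAbelianNine E) {x z : G} (hx : x ∈ E) (hz : z ∈ E) (hz_one : z ≠ 1)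
    (hxz : x ∉ Subgroup.zpowers z) (y : G) :
    cosetWeight E y = lineWeight z y + lineWeight z (x * y) + lineWeight z (x ^ 2 * y) := by
  rw [cosetWeight,
    ← Equiv.sum_comp (Equiv.ofBijective _ (hE.bijective_pow_mul_pow hx hz hz_one hxz)),
    Fintype.sum_prod_type]
  simp [Fin.sum_univ_three, lineWeight, mul_assoc]

lemma IsElementaryAbelianNine.mul_pow_three_of_cubeLines {E : Subgroup G}
    (hE : IsElementaryAbelianNine E) {x y z : G} (hx : x ∈ E) (hz : z ∈ E) (hz_one : z ≠ 1)
    (hxz : x ∉ Subgroup.zpowers z) (h₀ : IsCubeLine z y) (h₁ : IsCubeLine z (x * y))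
    (h₂ : IsCubeLine z (x ^ 2 * y)) {e : G} (he : e ∈ E) : (e * y) ^ 3 = 1 := by
  obtain ⟨⟨i, j⟩, hij⟩ := (hE.bijective_pow_mul_pow hx hz hz_one hxz).surjective ⟨e, he⟩
  obtain rfl : z ^ (j : ℕ) * x ^ (i : ℕ) = e := congrArg Subtype.val hij
  have hline : ∀ w, IsCubeLine z w → (z ^ (j : ℕ) * w) ^ 3 = 1 := by
    intro w hw
    fin_cases j
    · simpa using hw.pow_three
    · simpa using hw.mul_pow_three
    · simpa using hw.sq_mul_pow_three
  rw [mul_assoc]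
  fin_cases i
  · simpa using hline y h₀
  · simpa using hline (x * y) h₁
  · simpa using hline (x ^ 2 * y) h₂

lemma exists_isPGroup_of_mul_pow_three {E : Subgroup G} (hE : ∀ a ∈ E, a ^ 3 = 1) {y : G}
    (hy : ∀ e ∈ E, (e * y) ^ 3 = 1) : ∃ Q : Subgroup G, IsPGroup 3 Q ∧ E ≤ Q ∧ y ∈ Q := by
  set S : Set G := {g | ∃ e ∈ E, e * y * e⁻¹ = g}
  have hS_comm : ∀ a ∈ S, ∀ b ∈ S, a * b = b * a := by
    rintro _ ⟨e, he, rfl⟩ _ ⟨f, hf, rfl⟩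
    have hef : e⁻¹ * f ∈ E := E.mul_mem (E.inv_mem he) hf
    have hcomm := (commute_of_mul_pow_three (hE _ hef) (hy _ hef) (hy _ (E.pow_mem hef 2))).1
    have hconj := (Commute.conj_iff e).mpr hcomm
    rwa [show e * (e⁻¹ * f * y * (e⁻¹ * f)⁻¹) * e⁻¹ = f * y * f⁻¹ by group] at hconj
  have := Subgroup.isMulCommutative_closure hS_comm
  have hS_pow : ∀ a ∈ Subgroup.closure S, a ^ 3 = 1 := by
    intro a ha
    induction ha using Subgroup.closure_induction with
    | mem g hg =>
      obtain ⟨e, -, rfl⟩ := hg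
      rw [conj_pow, ← one_mul y, hy 1 E.one_mem, mul_one, mul_inv_cancel]
    | one => exact one_pow 3
    | mul a b ha hb iha ihb =>
      have hab : Commute a b :=
        congrArg Subtype.val (mul_comm' (⟨a, ha⟩ : Subgroup.closure S) ⟨b, hb⟩)
      rw [hab.mul_pow, iha, ihb, one_mul]
    | inv a _ iha => rw [inv_pow, iha, inv_one]
  have hE_pGroup : IsPGroup 3 E := fun g ↦ ⟨1, Subtype.ext (hE g g.2)⟩
  have hS_pGroup : IsPGroup 3 (Subgroup.closure S) := fun g ↦ ⟨1, Subtype.ext (hS_pow g g.2)⟩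
  have hE_le : E ≤ Subgroup.normalizer (Subgroup.closure S : Set G) := by
    rw [Subgroup.le_normalizer_closure_iff]
    rintro e he _ ⟨f, hf, rfl⟩
    exact Subgroup.subset_closure ⟨e * f, E.mul_mem he hf, by group⟩
  exact ⟨E ⊔ Subgroup.closure S, hE_pGroup.to_sup_of_normal_right' hS_pGroup hE_le, le_sup_left,
    Subgroup.mem_sup_right (Subgroup.subset_closure ⟨1, E.one_mem, by simp⟩)⟩

end ElementaryAbelian

section HeavyCoset

variable {G : Type*} [Group G] {E : Subgroup G} {x y z : G}

lemma mul_ne_one_of_notMem {e : G} (he : e ∈ E) (hy : y ∉ E) : e * y ≠ 1 :=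
  fun h ↦ hy (by simpa [h] using (E.mul_mem_cancel_left he (y := y)).not.mpr hy)

namespace IsCubeLine

lemma lineWeight_eq (hL : IsCubeLine z y) (hz : z ∈ E) (hy : y ∉ E) : lineWeight z y = 3 := by
  have h₁ := mul_ne_one_of_notMem hz hy
  have h₂ := mul_ne_one_of_notMem (E.pow_mem hz 2) hy
  rw [lineWeight, orderWeight_of_pow_three (ne_of_mem_of_not_mem E.one_mem hy).symm hL.pow_three,
    orderWeight_of_pow_three h₁ hL.mul_pow_three, orderWeight_of_pow_three h₂ hL.sq_mul_pow_three]
  norm_num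

variable (hL : IsCubeLine z y) (hE : IsElementaryAbelianNine E) (hx : x ∈ E) (hz : z ∈ E)

section Finite

variable [Finite G] (hy : y ∉ E)
include hL hE hx hz hy

lemma mul_pow_three_or_orderWeight_le (hw : (x * y) ^ 3 = 1) :
    (z * (x * y)) ^ 3 = 1 ∨ orderWeight (z * (x * y)) ≤ -2 := by
  by_contra! h
  have hne : z * (x * y) ≠ 1 := mul_assoc z x y ▸ mul_ne_one_of_notMem (E.mul_mem hz hx) hy
  exact hne (hL.eq_one_of_parallel (hE.commute hx hz) (hE.pow_three z hz) hw
    (pow_twenty_of_orderWeight (by lia) (orderWeight_nonpos h.1)))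

lemma parallel_or_lineWeight_neg (hw : (x * y) ^ 3 = 1) :
    IsCubeLine z (x * y) ∨ lineWeight z (x * y) < 0 := by
  have hz₃ := hE.pow_three z hz
  have hz_sq := E.pow_mem hz 2
  have hL_sq := (sq_left_iff hz₃).mpr hL
  rcases hL.mul_pow_three_or_orderWeight_le hE hx hz hy hw with h₁ | h₁
  · exact .inl (hL.of_parallel (hE.commute hx hz) hw h₁)
  rcases hL_sq.mul_pow_three_or_orderWeight_le hE hx hz_sq hy hw with h₂ | h₂
  · exact .inl ((sq_left_iff hz₃).mp (hL_sq.of_parallel (hE.commute hx hz_sq) hw h₂))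
  have h₀ := orderWeight_of_pow_three (mul_ne_one_of_notMem hx hy) hw
  exact .inr (by rw [lineWeight]; lia)

lemma parallel_trichotomy :
    IsCubeLine z (x * y) ∨ lineWeight z (x * y) < 0 ∨
      orderWeight (x * y) = 0 ∧ orderWeight (z * (x * y)) = 0 ∧
        orderWeight (z ^ 2 * (x * y)) = 0 := by
  have hz₃ := hE.pow_three z hz
  by_cases h₀ : (x * y) ^ 3 = 1
  · exact or_assoc.mp (.inl (hL.parallel_or_lineWeight_neg hE hx hz hy h₀))
  by_cases h₁ : (z * (x * y)) ^ 3 = 1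
  · have h := hL.parallel_or_lineWeight_neg hE (E.mul_mem hz hx) hz hy (by rwa [mul_assoc])
    rw [mul_assoc, mul_left_iff hz₃, lineWeight_mul_left hz₃] at h
    exact or_assoc.mp (.inl h)
  by_cases h₂ : (z ^ 2 * (x * y)) ^ 3 = 1
  · have h := hL.parallel_or_lineWeight_neg hE (E.mul_mem (E.pow_mem hz 2) hx) hz hy
      (by rwa [mul_assoc])
    rw [pow_two, mul_assoc, mul_assoc, mul_left_iff hz₃, mul_left_iff hz₃,
      lineWeight_mul_left hz₃, lineWeight_mul_left hz₃] at h
    exact or_assoc.mp (.inl h)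
  have hw₀ := orderWeight_nonpos h₀
  have hw₁ := orderWeight_nonpos h₁
  have hw₂ := orderWeight_nonpos h₂
  rw [lineWeight]
  lia

omit hy in
lemma third_parallel (hz_one : z ≠ 1) (hLx : IsCubeLine z (x * y))
    (hweight : -3 ≤ lineWeight z (x ^ 2 * y)) : IsCubeLine z (x ^ 2 * y) := by
  have hxz := hE.commute hx hz
  have hcube := hL.pow_mul_pow_three_eq (hxz.pow_left 2)
    ((hL.commute_conj_of_parallel hxz hLx).pow_left 2)
  have hcube_one := hcube 1
  rw [pow_one] at hcube_one
  by_cases h : (x ^ 2 * y) ^ 3 = 1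
  · exact ⟨h, hcube_one.trans h, (hcube 2).trans h⟩
  generalize x ^ 2 * y = v at *
  have hz_sq : z ^ 2 ≠ 1 := fun h ↦ hz_one (by simpa [pow_succ, h] using hE.pow_three z hz)
  -- Cubing is injective on elements of order 2, 4 or 5, so at most one weight exceeds `-2`.
  have h₀₁ := orderWeight_le_of_pow_three_eq (by simpa using hz_one) h hcube_one.symm
  have h₀₂ := orderWeight_le_of_pow_three_eq (by simpa using hz_sq) h (hcube 2).symm
  have h₁₂ := orderWeight_le_of_pow_three_eq (by simpa [pow_two] using hz_one)
    (hcube_one ▸ h) (hcube_one.trans (hcube 2).symm)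
  have hw₀ := orderWeight_nonpos h
  have hw₁ := orderWeight_nonpos (hcube_one ▸ h)
  have hw₂ := orderWeight_nonpos (hcube 2 ▸ h)
  rw [lineWeight] at hweight
  lia

lemma parallels_of_three_le_cosetWeight [Fintype E] (hz_one : z ≠ 1)
    (hxz : x ∉ Subgroup.zpowers z) (hweight : 3 ≤ cosetWeight E y) :
    IsCubeLine z (x * y) ∧ IsCubeLine z (x ^ 2 * y) := by
  have hx_sq := E.pow_mem hx 2
  have hx_four : (x ^ 2) ^ 2 = x := by rw [← pow_mul, pow_succ x 3, hE.pow_three x hx, one_mul]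
  rw [hE.cosetWeight_eq hx hz hz_one hxz, hL.lineWeight_eq hz hy] at hweight
  have second_of_first (h : IsCubeLine z (x * y)) : IsCubeLine z (x ^ 2 * y) := by
    have := h.lineWeight_eq hz ((E.mul_mem_cancel_left hx).not.mpr hy)
    exact hL.third_parallel hE hx hz hz_one h (by lia)
  have first_of_second (h : IsCubeLine z (x ^ 2 * y)) : IsCubeLine z (x * y) := by
    have := h.lineWeight_eq hz ((E.mul_mem_cancel_left hx_sq).not.mpr hy)
    have := hL.third_parallel hE hx_sq hz hz_one h
    rw [hx_four] at this
    exact this (by lia)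
  rcases hL.parallel_trichotomy hE hx hz hy with h₁ | h₁
  · exact ⟨h₁, second_of_first h₁⟩
  rcases hL.parallel_trichotomy hE hx_sq hz hy with h₂ | h₂
  · exact ⟨first_of_second h₂, h₂⟩
  rw [lineWeight, lineWeight] at *
  obtain ⟨hw₁, hw₁', -⟩ := h₁.resolve_left (by lia)
  obtain ⟨hw₂, hw₂', -⟩ := h₂.resolve_left (by lia)
  have hx_inv : x ^ 2 = x⁻¹ := eq_inv_of_mul_eq_one_left (by rw [← pow_succ, hE.pow_three x hx])
  rw [hx_inv] at hw₂ hw₂'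
  exact absurd (hL.eq_one_of_parallel_pow_four (hE.commute hx hz)
    (pow_four_of_orderWeight_eq_zero hw₁) (pow_four_of_orderWeight_eq_zero hw₁')
    (pow_four_of_orderWeight_eq_zero hw₂) (pow_four_of_orderWeight_eq_zero hw₂')
    (hE.pow_three x hx)) hz_one

omit hx in
lemma coset_pow_three_of_three_le_cosetWeight [Fintype E] (hz_one : z ≠ 1)
    (hweight : 3 ≤ cosetWeight E y) {e : G} (he : e ∈ E) : (e * y) ^ 3 = 1 := by
  obtain ⟨x, hx, hxz⟩ := hE.exists_notMem_zpowers hz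
  obtain ⟨h₁, h₂⟩ := hL.parallels_of_three_le_cosetWeight hE hx hz hy hz_one hxz hweight
  exact hE.mul_pow_three_of_cubeLines hx hz hz_one hxz hL h₁ h₂ he

end Finite

end IsCubeLine

lemma exists_three_pow_three_of_three_le_cosetWeight [Finite G] [Fintype E] (hy : y ∉ E)
    (hweight : 3 ≤ cosetWeight E y) :
    ∃ u ∈ E, ∃ z ∈ E, ∃ x ∈ E, z ≠ 1 ∧ x ≠ 1 ∧ x ≠ z ∧
      (u * y) ^ 3 = 1 ∧ (z * (u * y)) ^ 3 = 1 ∧ (x * (u * y)) ^ 3 = 1 := by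
  classical
  have hle : cosetWeight E y ≤ Finset.card {e : E | (e * y) ^ 3 = 1} := by
    rw [cosetWeight, Finset.natCast_card_filter]
    refine Finset.sum_le_sum fun e _ ↦ ?_
    split_ifs with he
    · exact orderWeight_le_one (mul_ne_one_of_notMem e.2 hy)
    · exact orderWeight_nonpos he
  obtain ⟨a, ha, b, hb, c, hc, hab, hac, hbc⟩ :=
    Finset.two_lt_card.mp (by lia : 2 < Finset.card {e : E | (e * y) ^ 3 = 1})
  simp only [Finset.mem_filter_univ] at ha hb hc
  exact ⟨a, a.2, b * (a : G)⁻¹, (b * a⁻¹).2, c * (a : G)⁻¹, (c * a⁻¹).2,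
    by simpa [mul_inv_eq_one] using hab.symm, by simpa [mul_inv_eq_one] using hac.symm,
    by simpa using hbc.symm, ha, by simpa [mul_assoc], by simpa [mul_assoc]⟩

/-- The coset `E * y`, regarded as an affine plane over `𝔽₃`, contains no line all of whose points
have trivial cube. -/
def NoCubeLine (E : Subgroup G) (y : G) : Prop :=
  ∀ z ∈ E, z ≠ 1 → ∀ e ∈ E, ¬IsCubeLine z (e * y)

namespace NoCubeLine

lemma mul_left (hN : NoCubeLine E y) {u : G} (hu : u ∈ E) : NoCubeLine E (u * y) :=
  fun z hz hz_one e he ↦ mul_assoc e u y ▸ hN z hz hz_one (e * u) (E.mul_mem he hu)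

lemma sq_mul_pow_three_ne (hN : NoCubeLine E y) (hz : z ∈ E) (hz_one : z ≠ 1)
    (hy : y ^ 3 = 1) (hzy : (z * y) ^ 3 = 1) : (z ^ 2 * y) ^ 3 ≠ 1 :=
  fun h ↦ hN z hz hz_one 1 E.one_mem (by rw [one_mul]; exact ⟨hy, hzy, h⟩)

section Weight

variable [Finite G] [Fintype E] (hN : NoCubeLine E y) (hE : IsElementaryAbelianNine E)
  (hy : y ∉ E) (hx : x ∈ E) (hz : z ∈ E) (hz_one : z ≠ 1)
  (hxz : x ∉ Subgroup.zpowers z) (hy₃ : y ^ 3 = 1) (hzy : (z * y) ^ 3 = 1) (hxy : (x * y) ^ 3 = 1)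
include hN hE hy hx hz hz_one hxz hy₃ hzy hxy

lemma cosetWeight_lt_three_of_parallelogram (hzxy : (z * (x * y)) ^ 3 = 1) :
    cosetWeight E y < 3 := by
  by_contra! hweight
  have hx_one : x ≠ 1 := fun h ↦ hxz (h ▸ one_mem _)
  have hzx_one : z * x ≠ 1 :=
    fun h ↦ hxz (eq_inv_of_mul_eq_one_right h ▸ inv_mem (Subgroup.mem_zpowers z))
  have hcomm := hE.commute hx hz
  -- The indices `i j` refer to the point `z ^ i * (x ^ j * y)` of the plane `E * y`.
  have h₂₀ := hN.sq_mul_pow_three_ne hz hz_one hy₃ hzy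
  have h₂₁ := (hN.mul_left hx).sq_mul_pow_three_ne hz hz_one hxy hzxy
  have h₀₂ := hN.sq_mul_pow_three_ne hx hx_one hy₃ hxy
  have h₁₂ := (hN.mul_left hz).sq_mul_pow_three_ne hx hx_one hzy (by rwa [hcomm.left_comm])
  have h₂₂ := hN.sq_mul_pow_three_ne (E.mul_mem hz hx) hzx_one hy₃ (by rwa [mul_assoc])
  rw [(hcomm.pow_left 2).left_comm] at h₁₂
  rw [hcomm.symm.mul_pow, mul_assoc] at h₂₂
  rw [hE.cosetWeight_eq hx hz hz_one hxz, lineWeight, lineWeight, lineWeight] at hweight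
  have w₀₀ := orderWeight_le_one (ne_of_mem_of_not_mem E.one_mem hy).symm
  have w₁₀ := orderWeight_le_one (mul_ne_one_of_notMem hz hy)
  have w₀₁ := orderWeight_le_one (mul_ne_one_of_notMem hx hy)
  have w₁₁ := orderWeight_le_one (mul_ne_one_of_notMem (E.mul_mem hz hx) hy)
  rw [mul_assoc] at w₁₁
  have w₂₀ := orderWeight_nonpos h₂₀
  have w₂₁ := orderWeight_nonpos h₂₁
  have w₀₂ := orderWeight_nonpos h₀₂
  have w₁₂ := orderWeight_nonpos h₁₂
  have w₂₂ := orderWeight_nonpos h₂₂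
  exact hx_one (eq_one_of_parallelogram (hE.pow_three x hx) (hE.pow_three z hz) hcomm hy₃ hzy hxy
    hzxy (pow_twenty_of_orderWeight (by lia) w₂₀) (pow_twenty_of_orderWeight (by lia) w₂₁))

lemma cosetWeight_lt_three_of_sq_mul_mul (hzxy : (z ^ 2 * (x * y)) ^ 3 = 1) :
    cosetWeight E y < 3 := by
  have hz₃ := hE.pow_three z hz
  have hz_sq := E.pow_mem hz 2
  have hz_sq_one : z ^ 2 ≠ 1 := fun h ↦ hz_one (by simpa [pow_succ, h] using hz₃)
  have hz_cancel (w : G) : z ^ 2 * (z * w) = w := by rw [← mul_assoc, ← pow_succ, hz₃, one_mul]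
  have hx_cancel : z ^ 2 * x * (z * y) = x * y := by
    rw [mul_assoc, (hE.commute hx hz).left_comm, hz_cancel]
  have hindep : z ^ 2 * x ∉ Subgroup.zpowers (z ^ 2) := fun h ↦ hxz <|
    Subgroup.zpowers_le.mpr (Subgroup.npow_mem_zpowers z 2)
      ((Subgroup.mul_mem_cancel_left _ (Subgroup.mem_zpowers _)).mp h)
  rw [← cosetWeight_mul_left hz]
  exact (hN.mul_left hz).cosetWeight_lt_three_of_parallelogram hE
    ((E.mul_mem_cancel_left hz).not.mpr hy) (E.mul_mem hz_sq hx) hz_sq hz_sq_one hindep hzy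
    (by rwa [hz_cancel]) (by rwa [hx_cancel]) (by rwa [hx_cancel])

lemma cosetWeight_lt_three_of_triangle : cosetWeight E y < 3 := by
  by_contra! hweight
  have hx_one : x ≠ 1 := fun h ↦ hxz (h ▸ one_mem _)
  have hzx_one : z * x⁻¹ ≠ 1 := fun h ↦ hxz (mul_inv_eq_one.mp h ▸ Subgroup.mem_zpowers z)
  have hcomm := hE.commute hx hz
  have h₁₁ := mt (hN.cosetWeight_lt_three_of_parallelogram hE hy hx hz hz_one hxz hy₃ hzy hxy)
    hweight.not_gt
  have h₂₁ := mt (hN.cosetWeight_lt_three_of_sq_mul_mul hE hy hx hz hz_one hxz hy₃ hzy hxy)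
    hweight.not_gt
  have h₁₂ := mt (hN.cosetWeight_lt_three_of_sq_mul_mul hE hy hz hx hx_one
    (hE.notMem_zpowers_symm hx hz_one hxz) hy₃ hxy hzy) hweight.not_gt
  have h₂₀ := hN.sq_mul_pow_three_ne hz hz_one hy₃ hzy
  have h₀₂ := hN.sq_mul_pow_three_ne hx hx_one hy₃ hxy
  have h₂₂ := (hN.mul_left hx).sq_mul_pow_three_ne (E.mul_mem hz (E.inv_mem hx)) hzx_one hxy
    (by simpa [mul_assoc])
  have hline : (z * x⁻¹) ^ 2 * (x * y) = z ^ 2 * (x ^ 2 * y) := by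
    have hx_inv : x⁻¹ = x ^ 2 := inv_eq_of_mul_eq_one_right (by rw [← pow_succ', hE.pow_three x hx])
    rw [hcomm.symm.inv_right.mul_pow, pow_two x⁻¹, ← hx_inv]
    simp [mul_assoc]
  rw [(hcomm.pow_left 2).left_comm] at h₁₂
  rw [hline] at h₂₂
  rw [hE.cosetWeight_eq hx hz hz_one hxz, lineWeight, lineWeight, lineWeight] at hweight
  have w₀₀ := orderWeight_le_one (ne_of_mem_of_not_mem E.one_mem hy).symm
  have w₁₀ := orderWeight_le_one (mul_ne_one_of_notMem hz hy)
  have w₀₁ := orderWeight_le_one (mul_ne_one_of_notMem hx hy)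
  have w₁₁ := orderWeight_nonpos h₁₁
  have w₂₀ := orderWeight_nonpos h₂₀
  have w₂₁ := orderWeight_nonpos h₂₁
  have w₀₂ := orderWeight_nonpos h₀₂
  have w₁₂ := orderWeight_nonpos h₁₂
  have w₂₂ := orderWeight_nonpos h₂₂
  exact hz_one (eq_one_of_triangle (hE.pow_three x hx) (hE.pow_three z hz) hcomm hy₃ hzy hxy
    (pow_four_of_orderWeight_eq_zero (by lia)) (pow_four_of_orderWeight_eq_zero (by lia))
    (pow_four_of_orderWeight_eq_zero (by lia)))

end Weight

lemma cosetWeight_lt_three [Finite G] [Fintype E] (hN : NoCubeLine E y)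
    (hE : IsElementaryAbelianNine E) (hy : y ∉ E) : cosetWeight E y < 3 := by
  by_contra! hweight
  obtain ⟨u, hu, z, hz, x, hx, hz_one, hx_one, hx_ne_z, hu₃, hzu, hxu⟩ :=
    exists_three_pow_three_of_three_le_cosetWeight hy hweight
  have hxz : x ∉ Subgroup.zpowers z := by
    classical
    rw [mem_zpowers_iff_mem_range_orderOf, orderOf_eq_prime (hE.pow_three z hz) hz_one]
    simp only [Finset.mem_image, Finset.mem_range, not_exists, not_and]
    rintro k hk rfl
    interval_cases k
    · exact hx_one (pow_zero z)
    · exact hx_ne_z (pow_one z)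
    · exact (hN.mul_left hu).sq_mul_pow_three_ne hz hz_one hu₃ hzu hxu
  have hlt := (hN.mul_left hu).cosetWeight_lt_three_of_triangle hE
    ((E.mul_mem_cancel_left hu).not.mpr hy) hx hz hz_one hxz hu₃ hzu hxu
  exact hweight.not_gt (by rwa [cosetWeight_mul_left hu] at hlt)

end NoCubeLine

lemma IsElementaryAbelianNine.exists_isPGroup_of_three_le_cosetWeight [Finite G] [Fintype E]
    (hE : IsElementaryAbelianNine E) (hy : y ∉ E) (hweight : 3 ≤ cosetWeight E y) :
    ∃ Q : Subgroup G, IsPGroup 3 Q ∧ E ≤ Q ∧ y ∈ Q := by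
  have hline : ¬NoCubeLine E y := fun hN ↦ (hN.cosetWeight_lt_three hE hy).not_ge hweight
  simp only [NoCubeLine, not_forall, not_not] at hline
  obtain ⟨z, hz, hz_one, u, hu, hL⟩ := hline
  refine exists_isPGroup_of_mul_pow_three hE.pow_three fun e he ↦ ?_
  have h := hL.coset_pow_three_of_three_le_cosetWeight hE hz
    ((E.mul_mem_cancel_left hu).not.mpr hy) hz_one (by rwa [cosetWeight_mul_left hu])
    (E.mul_mem he (E.inv_mem hu))
  simpa [mul_assoc] using h

end HeavyCoset

section Solvable

variable {G : Type*} [Group G]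

lemma isSolvable_of_isPGroup {p : ℕ} [Fact p.Prime] [Finite G] (hG : IsPGroup p G) :
    Group.IsSolvable G :=
  have := hG.isNilpotent
  inferInstance

lemma isSolvable_perm_fin_four : Group.IsSolvable (Equiv.Perm (Fin 4)) := by
  have hfour : Nat.card (Fin 4) = 4 := Nat.card_fin 4
  have hKlein : Group.IsSolvable (alternatingGroup.kleinFour (Fin 4)) :=
    isSolvable_of_isPGroup (p := 2) <| IsPGroup.of_card (n := 2)
      (alternatingGroup.kleinFour_card_of_card_eq_four hfour)
  have hAlt : Group.IsSolvable (alternatingGroup (Fin 4)) := by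
    rw [alternatingGroup.kleinFour_eq_commutator hfour] at hKlein
    exact (Group.isSolvable_iff_subgroup_quotient (commutator _)).2
      ⟨hKlein, inferInstanceAs (Group.IsSolvable (Abelianization _))⟩
  exact Group.isSolvable_of_ker_le_range (alternatingGroup (Fin 4)).subtype Equiv.Perm.sign
    (Subgroup.range_subtype _).ge

lemma isSolvable_of_index_le_four (H : Subgroup G) [H.FiniteIndex] [Group.IsSolvable H]
    (hH : H.index ≤ 4) : Group.IsSolvable G := by
  have : Fintype (G ⧸ H) := H.fintypeQuotientOfFiniteIndex
  obtain ⟨e⟩ : Nonempty ((G ⧸ H) ↪ Fin 4) := Function.Embedding.nonempty_of_card_le <| by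
    rwa [Fintype.card_fin, ← Nat.card_eq_fintype_card]
  have hS₄ := isSolvable_perm_fin_four
  have : Group.IsSolvable (Equiv.Perm (G ⧸ H)) :=
    Group.isSolvable_of_isSolvable_injective (Equiv.Perm.viaEmbeddingHom_injective e)
  refine Group.isSolvable_of_ker_le_range H.subtype (MulAction.toPermHom G (G ⧸ H)) ?_
  rw [← Subgroup.normalCore_eq_ker, Subgroup.range_subtype]
  exact H.normalCore_le

lemma isSolvable_of_sylow_index_eq_prime_pow [Finite G] {p q b : ℕ} [Fact p.Prime] [Fact q.Prime]
    (P : Sylow p G) (hP : P.index = q ^ b) (hdvd : ∀ d, d ∣ q ^ b → d ≡ 1 [MOD p] → d = 1) :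
    Group.IsSolvable G := by
  have hcard : Nat.card (Sylow p G) = 1 :=
    hdvd _ (hP ▸ P.card_dvd_index) (card_sylow_modEq_one p G)
  have : Subsingleton (Sylow p G) := (Nat.card_eq_one_iff_unique.1 hcard).1
  have := P.normal_of_subsingleton
  exact (Group.isSolvable_iff_subgroup_quotient (P : Subgroup G)).2
    ⟨isSolvable_of_isPGroup P.isPGroup', isSolvable_of_isPGroup (IsPGroup.of_card (p := q) hP)⟩

lemma isSolvable_of_commute_conj [Finite G] (hG : ∀ a b : G, Commute a (b * a * b⁻¹)) :
    Group.IsSolvable G := by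
  induction hn : Nat.card G using Nat.strong_induction_on generalizing G with
  | _ n ih
  subst hn
  by_cases htriv : ∀ a : G, a = 1
  · exact Group.isSolvable_of_comm fun a b ↦ by rw [htriv a, htriv b]
  obtain ⟨a, ha⟩ := not_forall.1 htriv
  set N := Subgroup.normalClosure {a}
  have hconj (c d : G) : Commute (c * a * c⁻¹) (d * a * d⁻¹) := by
    simpa [mul_assoc] using (hG a (c⁻¹ * d)).map (MulAut.conj c)
  have hNcomm : IsMulCommutative N := by
    refine Subgroup.isMulCommutative_closure fun u hu v hv ↦ ?_
    simp only [Group.mem_conjugatesOfSet_iff, Set.mem_singleton_iff, exists_eq_left,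
      isConj_iff] at hu hv
    obtain ⟨c, rfl⟩ := hu
    obtain ⟨d, rfl⟩ := hv
    exact hconj c d
  have hNone : 1 < Nat.card N := (Subgroup.one_lt_card_iff_ne_bot N).2 fun hbot ↦
    ha (Subgroup.mem_bot.1 (hbot ▸ Subgroup.subset_normalClosure rfl))
  have hquot : Nat.card (G ⧸ N) < Nat.card G := by
    rw [← N.card_mul_index]
    exact lt_mul_of_one_lt_left Nat.card_pos hNone
  refine (Group.isSolvable_iff_subgroup_quotient N).2
    ⟨Group.isSolvable_of_comm hNcomm.is_comm.comm, ih _ hquot ?_ rfl⟩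
  rintro ⟨x⟩ ⟨y⟩
  exact (hG x y).map (QuotientGroup.mk' N)

lemma commute_conj_of_mul_map_mul_map (φ : G →* G) (hφ : ∀ a, a * φ a * φ (φ a) = 1) (a b : G) :
    Commute a (b * a * b⁻¹) := by
  have mul_map (a : G) : a * φ a = (φ (φ a))⁻¹ := eq_inv_of_mul_eq_one_left (hφ a)
  have map_mul_map_map (a : G) : φ a * φ (φ a) = a⁻¹ :=
    eq_inv_of_mul_eq_one_right (by rw [← mul_assoc, hφ])
  have map_three (a : G) : φ (φ (φ a)) = a := by
    rw [← inv_inj, ← mul_map, map_mul_map_map]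
  have mul_conj_map (a b : G) :
      a * (b * φ a * b⁻¹) = (φ (φ b))⁻¹ * (φ (φ a))⁻¹ * φ (φ b) := by
    have hab := mul_map (a * b)
    simp only [map_mul, mul_inv_rev] at hab
    calc a * (b * φ a * b⁻¹) = a * b * (φ a * φ b) * (b * φ b)⁻¹ := by group
      _ = _ := by rw [hab, mul_map, inv_inv]
  have commute_conj_map (a b : G) : Commute a (b * φ a * b⁻¹) := by
    have hinv : a⁻¹ * (b * φ a * b⁻¹)⁻¹ = (b * φ a * b⁻¹)⁻¹ * a⁻¹ := by
      rw [← mul_inv_rev a, mul_conj_map, conj_inv, ← map_inv, mul_conj_map]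
      simp [mul_assoc]
    exact Commute.inv_inv_iff.1 hinv
  have commute_conj_map_map : Commute a (b * φ (φ a) * b⁻¹) := by
    have h := (commute_conj_map (φ (φ a)) b⁻¹).map (MulAut.conj b)
    rw [map_three] at h
    simpa [mul_assoc] using h.symm
  have hprod : b * φ a * b⁻¹ * (b * φ (φ a) * b⁻¹) = (b * a * b⁻¹)⁻¹ := by
    rw [conj_mul, map_mul_map_map, conj_inv]
  have hcomm := (commute_conj_map a b).mul_right commute_conj_map_map
  rw [hprod] at hcomm
  exact Commute.inv_right_iff.1 hcomm

lemma isSolvable_of_fixedPointFree [Finite G] {φ : MulAut G} (hφ : MonoidHom.FixedPointFree φ)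
    (hφ₃ : φ ^ 3 = 1) : Group.IsSolvable G := by
  have hiter : φ^[3] = id := funext fun a ↦ by simpa [pow_succ] using DFunLike.congr_fun hφ₃ a
  exact isSolvable_of_commute_conj <| commute_conj_of_mul_map_mul_map φ.toMonoidHom fun a ↦ by
    simpa [List.range_succ, mul_assoc] using hφ.prod_pow_eq_one hiter a

lemma isSolvable_of_normalizer_le [Finite G] (P : Sylow 3 G) (hcard : Nat.card P = 3)
    (hP : Subgroup.normalizer (P : Set G) ≤ P) : Group.IsSolvable G := by
  have : IsCyclic P := isCyclic_of_prime_card hcard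
  have hcent : Subgroup.normalizer (P : Set G) ≤ Subgroup.centralizer (P : Set G) :=
    hP.trans (Subgroup.le_centralizer _)
  set f := MonoidHom.transferSylow P hcent
  have hcompl : f.ker.IsComplement' P := MonoidHom.ker_transferSylow_isComplement' P hcent
  obtain ⟨x, hx⟩ := IsCyclic.exists_generator (α := P)
  have hfix : MonoidHom.FixedPointFree (MulAut.conjNormal (H := f.ker) (x : G)) := by
    intro l hl
    have hxl : Commute (x : G) l := mul_inv_eq_iff_eq_mul.1 (congrArg Subtype.val hl)
    have hlP : (l : G) ∈ Subgroup.centralizer (P : Set G) := by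
      rintro g hg
      obtain ⟨k, hk⟩ := hx ⟨g, hg⟩
      rw [← show (x : G) ^ k = g from congrArg Subtype.val hk]
      exact hxl.zpow_left k
    exact Subtype.ext <|
      Subgroup.disjoint_def.1 hcompl.disjoint l.2 (hP (Subgroup.centralizer_le_normalizer _ hlP))
  have hconj : MulAut.conjNormal (H := f.ker) (x : G) ^ 3 = 1 := by
    have hx₃ : x ^ 3 = 1 :=
      orderOf_dvd_iff_pow_eq_one.1 ((orderOf_dvd_natCard x).trans hcard.dvd)
    rw [← map_pow, ← Subgroup.coe_pow, hx₃, Subgroup.coe_one, map_one]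
  have : Group.IsSolvable f.ker := isSolvable_of_fixedPointFree hfix hconj
  exact Group.isSolvable_of_ker_le_range f.ker.subtype f (Subgroup.range_subtype _).ge

end Solvable

section Counting

variable {G : Type*} [Group G]

/-- The number of elements of order `n`, or zero if there are infinitely many. -/
noncomputable def numOrderOf (G : Type*) [Group G] (n : ℕ) : ℕ :=
  Nat.card {g : G // orderOf g = n}

lemma numOrderOf_congr {H : Type*} [Group H] (e : G ≃* H) (n : ℕ) :
    numOrderOf G n = numOrderOf H n :=
  Nat.card_congr (e.toEquiv.subtypeEquiv fun _ ↦ by simp)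

lemma numOrderOf_lt_card [Finite G] {n : ℕ} (hn : n ≠ 1) : numOrderOf G n < Nat.card G :=
  Finite.card_subtype_lt (x := 1) (by simpa using hn.symm)

lemma numOrderOf_subgroup (H : Subgroup G) (n : ℕ) :
    numOrderOf H n = Nat.card {g : G // g ∈ H ∧ orderOf g = n} := by
  simp only [numOrderOf, ← Subgroup.orderOf_coe]
  exact Nat.card_congr (Equiv.subtypeSubtypeEquivSubtypeInter (· ∈ H) (orderOf · = n))

lemma numOrderOf_subgroup_le [Finite G] {H K : Subgroup G} {n : ℕ}
    (hHK : ∀ g ∈ H, orderOf g = n → g ∈ K) : numOrderOf H n ≤ numOrderOf K n := by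
  rw [numOrderOf_subgroup, numOrderOf_subgroup]
  exact Nat.card_mono (Set.toFinite _) fun g hg ↦ ⟨hHK g hg.1 hg.2, hg.2⟩

lemma sub_one_le_numOrderOf [Finite G] {p : ℕ} (hp : p.Prime) (hdvd : p ∣ Nat.card G) :
    p - 1 ≤ numOrderOf G p := by
  have := Fact.mk hp
  obtain ⟨g, hg⟩ := exists_prime_orderOf_dvd_card' p hdvd
  have := Fintype.ofFinite (Subgroup.zpowers g)
  have htotient : numOrderOf (Subgroup.zpowers g) p = p - 1 := by
    rw [numOrderOf, Nat.card_eq_fintype_card, Fintype.card_subtype, ← Nat.totient_prime hp]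
    exact IsCyclic.card_orderOf_eq_totient
      (by rw [← Nat.card_eq_fintype_card, Nat.card_zpowers, hg])
  rw [← htotient, numOrderOf_subgroup]
  exact Nat.card_mono (Set.toFinite _) fun _ h ↦ h.2

lemma sum_orderWeight_add_card_le [Fintype G] :
    ∑ g : G, orderWeight g + Nat.card {g : G // 5 ≤ orderOf g} ≤ 3 + numOrderOf G 3 := by
  classical
  have hpoint (g : G) : orderWeight g + (if 5 ≤ orderOf g then 1 else 0) ≤
      (if g = 1 then 3 else 0) + (if orderOf g = 3 then 1 else 0) := by
    have hpos := orderOf_pos g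
    simp only [← orderOf_eq_one_iff (x := g), orderWeight]
    split_ifs <;> lia
  simpa [numOrderOf, Nat.card_eq_fintype_card, Fintype.card_subtype, Finset.sum_add_distrib]
    using Finset.sum_le_sum fun g (_ : g ∈ Finset.univ) ↦ hpoint g

lemma sum_orderWeight_le [Fintype G] : ∑ g : G, orderWeight g ≤ 3 + numOrderOf G 3 := by
  have := sum_orderWeight_add_card_le (G := G)
  lia

lemma sum_orderWeight_lt_of_prime_dvd [Fintype G] {p : ℕ} (hp : p.Prime) (hp₅ : 5 ≤ p)
    (hdvd : p ∣ Nat.card G) : ∑ g : G, orderWeight g < numOrderOf G 3 := by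
  have hmono : numOrderOf G p ≤ Nat.card {g : G // 5 ≤ orderOf g} :=
    Nat.card_mono (Set.toFinite _) fun g hg ↦ hp₅.trans_eq (Eq.symm hg)
  have hprime := sub_one_le_numOrderOf hp hdvd
  have hsum := sum_orderWeight_add_card_le (G := G)
  lia

section Sylow

variable [Finite G] {p : ℕ} [Fact p.Prime]

lemma card_sylow_mem_modEq_one {x : G} (hx : orderOf x = p) :
    Nat.card {Q : Sylow p G // x ∈ Q} ≡ 1 [MOD p] := by
  have hp : IsPGroup p (Subgroup.zpowers x) :=
    IsPGroup.of_card (n := 1) (by rw [Nat.card_zpowers, hx, pow_one])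
  have hfixed : Nat.card {Q : Sylow p G // x ∈ Q} =
      Nat.card (MulAction.fixedPoints (Subgroup.zpowers x) (Sylow p G)) :=
    Nat.card_congr <| Equiv.subtypeEquivRight fun Q ↦ by
      rw [hp.sylow_mem_fixedPoints_iff, Subgroup.zpowers_le]
      rfl
  rw [hfixed]
  exact (hp.card_modEq_card_fixedPoints (Sylow p G)).symm.trans (card_sylow_modEq_one p G)

lemma card_sylow_mem_ne_zero {x : G} (hx : orderOf x = p) :
    Nat.card {Q : Sylow p G // x ∈ Q} ≠ 0 := by
  have hp : p.Prime := Fact.out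
  intro hzero
  have hdvd := (Nat.modEq_zero_iff_dvd).1 (hzero ▸ card_sylow_mem_modEq_one hx).symm
  exact hp.one_lt.ne' (Nat.dvd_one.1 hdvd)

lemma numOrderOf_mul_le_card_sylow_mul (P : Sylow p G) {n c : ℕ}
    (hc : ∀ x : G, orderOf x = n → c ≤ Nat.card {Q : Sylow p G // x ∈ Q}) :
    numOrderOf G n * c ≤ Nat.card (Sylow p G) * numOrderOf P n := by
  classical
  have := Fintype.ofFinite G
  have := Fintype.ofFinite (Sylow p G)
  have hcount := Finset.card_mul_le_card_mul (fun (x : G) (Q : Sylow p G) ↦ x ∈ Q)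
    (s := {x | orderOf x = n}) (t := Finset.univ) (m := c) (n := numOrderOf P n) ?_ ?_
  · simpa [numOrderOf, Nat.card_eq_fintype_card, Fintype.card_subtype] using hcount
  · intro x hx
    simpa [Finset.bipartiteAbove, Nat.card_eq_fintype_card, Fintype.card_subtype]
      using hc x (by simpa using hx)
  · intro Q _
    rw [numOrderOf_congr (P.equiv Q), numOrderOf_subgroup, Finset.bipartiteBelow,
      Finset.filter_filter, Nat.card_eq_fintype_card, Fintype.card_subtype]
    exact Finset.card_le_card fun x hx ↦
      (Finset.mem_filter_univ x).2 ((Finset.mem_filter_univ x).1 hx).symm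

lemma numOrderOf_le_card_sylow_mul (P : Sylow p G) :
    numOrderOf G p ≤ Nat.card (Sylow p G) * numOrderOf P p := by
  simpa using numOrderOf_mul_le_card_sylow_mul P fun x hx ↦
    Nat.one_le_iff_ne_zero.2 (card_sylow_mem_ne_zero hx)

end Sylow

end Counting

section SmallSylow

variable {G : Type*} [Group G]

lemma isSolvable_of_primeFactors_lt_five [Finite G] (P : Sylow 3 G) (hP : Nat.card P ≤ 3)
    (hprime : ∀ p, p.Prime → p ∣ Nat.card G → p < 5) : Group.IsSolvable G := by
  obtain ⟨Q⟩ : Nonempty (Sylow 2 G) := inferInstance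
  have hindexP : P.index = 2 ^ P.index.primeFactorsList.length := by
    refine Nat.eq_prime_pow_of_unique_prime_dvd Subgroup.index_ne_zero_of_finite ?_
    intro d hd hdvd
    have hd₅ := hprime d hd (hdvd.trans (P : Subgroup G).index_dvd_card)
    obtain rfl | rfl : d = 2 ∨ d = 3 := by
      interval_cases d <;> revert hd <;> decide
    · rfl
    · exact absurd hdvd P.not_dvd_index
  have hdvd : P.index ∣ Nat.card Q := by
    rw [hindexP]
    exact Q.pow_dvd_card_of_pow_dvd_card (hindexP ▸ (P : Subgroup G).index_dvd_card)
  have hindexQ : P.index * Q.index ≤ P.index * 3 :=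
    calc P.index * Q.index ≤ Nat.card Q * Q.index :=
          Nat.mul_le_mul_right _ (Nat.le_of_dvd Nat.card_pos hdvd)
      _ = P.index * Nat.card P := by
          rw [Q.card_mul_index, mul_comm, P.card_mul_index]
      _ ≤ P.index * 3 := Nat.mul_le_mul_left _ hP
  have := isSolvable_of_isPGroup Q.isPGroup'
  exact isSolvable_of_index_le_four (Q : Subgroup G) <|
    (Nat.le_of_mul_le_mul_left hindexQ (Nat.pos_of_ne_zero Subgroup.index_ne_zero_of_finite)).trans
      (by norm_num)

lemma isSolvable_of_card_sylow_le_three [Fintype G] (P : Sylow 3 G) (hP : Nat.card P ≤ 3)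
    (hweight : 7 * (Nat.card G : ℤ) < 20 * ∑ g : G, orderWeight g) : Group.IsSolvable G := by
  by_cases hprime : ∀ p, p.Prime → p ∣ Nat.card G → p < 5
  · exact isSolvable_of_primeFactors_lt_five P hP hprime
  push Not at hprime
  obtain ⟨p, hp, hdvd, hp₅⟩ := hprime
  set N := Subgroup.normalizer (P : Set G)
  have hsum := sum_orderWeight_lt_of_prime_dvd hp hp₅ hdvd
  have hthree := numOrderOf_le_card_sylow_mul P
  have hlt := numOrderOf_lt_card (G := P) (n := 3) (by norm_num)
  have hcard : Nat.card (Sylow 3 G) * Nat.card N = Nat.card G := by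
    rw [P.card_eq_index_normalizer, Subgroup.index_mul_card]
  have hdvdN : Nat.card P ∣ Nat.card N := Subgroup.card_dvd_of_le Subgroup.le_normalizer
  have hN : 7 * Nat.card N < 20 * numOrderOf P 3 := by
    refine Nat.lt_of_mul_lt_mul_left (a := Nat.card (Sylow 3 G)) ?_
    lia
  have hPcard : Nat.card P = 3 := by
    obtain ⟨k, hk⟩ := IsPGroup.iff_card.1 P.isPGroup'
    have hk_le : k ≤ 1 := (Nat.pow_le_pow_iff_right (by norm_num)).1 (hk ▸ hP)
    interval_cases k <;> lia
  have hPN : (P : Subgroup G) = N :=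
    Subgroup.eq_of_le_of_card_ge Subgroup.le_normalizer (by rw [hPcard] at hdvdN; lia)
  exact isSolvable_of_normalizer_le P hPcard hPN.ge

end SmallSylow

section LargeSylow

variable {G : Type*} [Group G] {x z : G}

lemma isElementaryAbelianNine_sup_zpowers (hx : orderOf x = 3) (hz : orderOf z = 3)
    (hxz : Commute x z) (hmem : x ∉ Subgroup.zpowers z) :
    IsElementaryAbelianNine (Subgroup.zpowers x ⊔ Subgroup.zpowers z) := by
  have hcomm (a : Subgroup.zpowers x) (b : Subgroup.zpowers z) :
      Commute ((Subgroup.zpowers x).subtype a) ((Subgroup.zpowers z).subtype b) := by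
    obtain ⟨_, i, rfl⟩ := a
    obtain ⟨_, j, rfl⟩ := b
    exact hxz.zpow_zpow i j
  set f := (Subgroup.zpowers x).subtype.noncommCoprod (Subgroup.zpowers z).subtype hcomm with hf
  have hrange : f.range = Subgroup.zpowers x ⊔ Subgroup.zpowers z := by
    simp [hf, MonoidHom.noncommCoprod_range]
  have hinj : Function.Injective f := by
    rw [hf, MonoidHom.noncommCoprod_injective]
    simpa [Subgroup.subtype_injective] using
      disjoint_zpowers_of_prime_orderOf (hx ▸ Nat.prime_three) hmem
  rw [← hrange]
  constructor
  · calc Nat.card f.range = Nat.card (Subgroup.zpowers x × Subgroup.zpowers z) :=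
          Nat.card_range_of_injective hinj
      _ = 9 := by rw [Nat.card_prod, Nat.card_zpowers, Nat.card_zpowers, hx, hz]
  · rintro _ ⟨a, rfl⟩
    have hcube {w : G} (hw : orderOf w = 3) (b : Subgroup.zpowers w) : b ^ 3 = 1 :=
      orderOf_dvd_iff_pow_eq_one.1 <|
        (orderOf_dvd_natCard b).trans (by rw [Nat.card_zpowers, hw])
    rw [← map_pow, show a ^ 3 = 1 from Prod.ext (hcube hx _) (hcube hz _), map_one]

lemma exists_mem_center_orderOf_eq [Finite G] {p : ℕ} [Fact p.Prime] [Nontrivial G]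
    (hG : IsPGroup p G) : ∃ z ∈ Subgroup.center G, orderOf z = p := by
  have := hG.center_nontrivial
  obtain ⟨k, hk, hcard⟩ := (hG.to_subgroup (Subgroup.center G)).nontrivial_iff_card.1 this
  obtain ⟨z, hz⟩ := exists_prime_orderOf_dvd_card' p (hcard ▸ dvd_pow_self p hk.ne')
  exact ⟨z, z.2, by rw [Subgroup.orderOf_coe, hz]⟩

lemma exists_isElementaryAbelianNine_or_numOrderOf_le_two [Finite G] {P : Subgroup G}
    (hP : IsPGroup 3 P) (hxP : x ∈ P) (hx : orderOf x = 3) :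
    (∃ E, IsElementaryAbelianNine E ∧ x ∈ E ∧ E ≤ P) ∨ numOrderOf P 3 ≤ 2 := by
  rw [or_iff_not_imp_left]
  intro hE
  have hzpowers {y : G} (hyP : y ∈ P) (hy : orderOf y = 3) (hxy : Commute x y) :
      Subgroup.zpowers x = Subgroup.zpowers y := by
    have hmem : x ∈ Subgroup.zpowers y := by
      by_contra hmem
      exact hE ⟨_, isElementaryAbelianNine_sup_zpowers hx hy hxy hmem,
        Subgroup.mem_sup_left (Subgroup.mem_zpowers x), by simp [hxP, hyP]⟩
    exact Subgroup.eq_of_le_of_card_ge (Subgroup.zpowers_le.2 hmem)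
      (by rw [Nat.card_zpowers, Nat.card_zpowers, hx, hy])
  have : Nontrivial P := ⟨⟨x, hxP⟩, 1, fun h ↦ by simp_all⟩
  obtain ⟨z, hz, hz₃⟩ := exists_mem_center_orderOf_eq hP
  have hz_comm {y : G} (hyP : y ∈ P) : Commute y z :=
    congrArg Subtype.val (Subgroup.mem_center_iff.1 hz ⟨y, hyP⟩)
  have hx_comm {y : G} (hyP : y ∈ P) : Commute x y := by
    obtain ⟨i, hi⟩ : x ∈ Subgroup.zpowers (z : G) :=
      hzpowers z.2 (by rwa [Subgroup.orderOf_coe]) (hz_comm hxP) ▸ Subgroup.mem_zpowers x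
    exact hi ▸ ((hz_comm hyP).zpow_right i).symm
  have hle : numOrderOf P 3 ≤ numOrderOf (Subgroup.zpowers x) 3 := numOrderOf_subgroup_le
    fun y hyP hy ↦ hzpowers hyP hy (hx_comm hyP) ▸ Subgroup.mem_zpowers y
  have hlt : numOrderOf (Subgroup.zpowers x) 3 < 3 := by
    simpa [hx] using numOrderOf_lt_card (G := Subgroup.zpowers x) (n := 3) (by norm_num)
  lia

lemma exists_card_sylow_mem_eq_one [Fintype G] {P : Sylow 3 G} (hP : 9 ≤ Nat.card P)
    (hweight : 7 * (Nat.card G : ℤ) < 20 * ∑ g : G, orderWeight g) :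
    ∃ x : G, orderOf x = 3 ∧ Nat.card {Q : Sylow 3 G // x ∈ Q} = 1 := by
  by_contra! hne
  have hfour (x : G) (hx : orderOf x = 3) : 4 ≤ Nat.card {Q : Sylow 3 G // x ∈ Q} := by
    have hmod : Nat.card {Q : Sylow 3 G // x ∈ Q} % 3 = 1 := card_sylow_mem_modEq_one hx
    have := hne x hx
    lia
  have hcount := numOrderOf_mul_le_card_sylow_mul P hfour
  have hlt := numOrderOf_lt_card (G := P) (n := 3) (by norm_num)
  have hsum := sum_orderWeight_le (G := G)
  have hindex : Nat.card (Sylow 3 G) ≤ P.index :=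
    Nat.le_of_dvd (Nat.pos_of_ne_zero Subgroup.index_ne_zero_of_finite) P.card_dvd_index
  have hcard := (P : Subgroup G).card_mul_index
  have hfour_le : 4 ≤ Nat.card (Sylow 3 G) := by
    have : Nontrivial P := Finite.one_lt_card_iff_nontrivial.1 (by lia)
    obtain ⟨x, -, hx⟩ := exists_mem_center_orderOf_eq P.isPGroup'
    exact (hfour x (by rwa [Subgroup.orderOf_coe])).trans (Finite.card_subtype_le _)
  have hnine : Nat.card (Sylow 3 G) * 9 ≤ Nat.card G := by
    rw [← hcard, mul_comm (Nat.card P)]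
    exact Nat.mul_le_mul hindex hP
  have hmul : Nat.card (Sylow 3 G) * (numOrderOf P 3 + 1) ≤ Nat.card G := by
    rw [← hcard, mul_comm (Nat.card P)]
    exact Nat.mul_le_mul hindex hlt
  lia

lemma IsElementaryAbelianNine.cosetWeight_le [Finite G] {E : Subgroup G} [Fintype E]
    (hE : IsElementaryAbelianNine E) (y : G) [Decidable (y ∈ E)] :
    cosetWeight E y ≤ 9 + (if y ∈ E then 2 else 0) := by
  classical
  have hcard : Fintype.card E = 9 := by rw [← Nat.card_eq_fintype_card, hE.card_eq]
  have hpoint (e : E) : orderWeight (e * y : G) ≤ 1 + (if (e * y : G) = 1 then 2 else 0) := by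
    split_ifs with hey
    · simp [hey, orderWeight]
    · simpa using orderWeight_le_one hey
  have hone : ∑ e : E, (if (e * y : G) = 1 then (2 : ℤ) else 0) = if y ∈ E then 2 else 0 := by
    split_ifs with hy
    · have hiff (e : E) : (e * y : G) = 1 ↔ e = ⟨y, hy⟩⁻¹ := by
        simp [Subtype.ext_iff, mul_eq_one_iff_eq_inv]
      simp [hiff]
    · exact Finset.sum_eq_zero fun e _ ↦ if_neg (mul_ne_one_of_notMem e.2 hy)
  calc cosetWeight E y ≤ ∑ e : E, (1 + if (e * y : G) = 1 then 2 else 0) :=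
        Finset.sum_le_sum fun e _ ↦ hpoint e
    _ = 9 + if y ∈ E then 2 else 0 := by
        rw [Finset.sum_add_distrib, hone]
        simp [hcard]

lemma nine_mul_sum_orderWeight_le [Fintype G] {P E : Subgroup G} (hE : IsElementaryAbelianNine E)
    (hEP : E ≤ P) (hP : ∀ Q : Subgroup G, IsPGroup 3 Q → E ≤ Q → Q ≤ P) :
    9 * ∑ g : G, orderWeight g ≤ 2 * (Nat.card G : ℤ) + 7 * Nat.card P + 18 := by
  classical
  have hpoint (y : G) : cosetWeight E y ≤
      2 + (if y ∈ P then 7 else 0) + (if y ∈ E then 2 else 0) := by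
    by_cases hyP : y ∈ P
    · simpa [hyP] using hE.cosetWeight_le y
    · have hyE : y ∉ E := fun hyE ↦ hyP (hEP hyE)
      by_contra! hweight
      obtain ⟨Q, hQ, hEQ, hyQ⟩ := hE.exists_isPGroup_of_three_le_cosetWeight hyE
        (by simpa [hyP, hyE, Int.lt_iff_add_one_le] using hweight)
      exact hyP (hP Q hQ hEQ hyQ)
  have hcardE : Fintype.card E = 9 := by rw [← Nat.card_eq_fintype_card, hE.card_eq]
  have hcardG (H : Subgroup G) : (Finset.univ.filter (· ∈ H)).card = Nat.card H := by
    rw [← Fintype.card_subtype, ← Nat.card_eq_fintype_card]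
  have hshift (e : E) : ∑ g : G, orderWeight (e * g : G) = ∑ g : G, orderWeight g :=
    Equiv.sum_comp (Equiv.mulLeft (e : G)) orderWeight
  calc 9 * ∑ g : G, orderWeight g = ∑ e : E, ∑ g : G, orderWeight (e * g : G) := by
        simp [hshift, hcardE]
    _ = ∑ y : G, cosetWeight E y := Finset.sum_comm
    _ ≤ ∑ y : G, (2 + (if y ∈ P then 7 else 0) + (if y ∈ E then 2 else 0)) :=
        Finset.sum_le_sum fun y _ ↦ hpoint y
    _ = 2 * (Nat.card G : ℤ) + 7 * Nat.card P + 18 := by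
        simp [Finset.sum_add_distrib, Finset.sum_ite, hcardG, hcardE, mul_comm]

lemma isSolvable_of_numOrderOf_sylow_le_two [Fintype G] (P : Sylow 3 G) (hP : 9 ≤ Nat.card P)
    (htwo : numOrderOf P 3 ≤ 2)
    (hweight : 7 * (Nat.card G : ℤ) < 20 * ∑ g : G, orderWeight g) : Group.IsSolvable G := by
  have hsum := sum_orderWeight_le (G := G)
  have hthree : numOrderOf G 3 ≤ P.index * 2 :=
    (numOrderOf_le_card_sylow_mul P).trans <| Nat.mul_le_mul
      (Nat.le_of_dvd (Nat.pos_of_ne_zero Subgroup.index_ne_zero_of_finite) P.card_dvd_index) htwo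
  have hcard : 9 * P.index ≤ Nat.card G :=
    (Nat.mul_le_mul_right _ hP).trans_eq (P : Subgroup G).card_mul_index
  have := isSolvable_of_isPGroup P.isPGroup'
  exact isSolvable_of_index_le_four (P : Subgroup G) (by lia)

lemma isSolvable_of_card_eq_sixty_three (hG : Nat.card G = 63) : Group.IsSolvable G := by
  have : Finite G := Nat.finite_of_card_ne_zero (by lia)
  have := Fact.mk (show Nat.Prime 7 by norm_num)
  obtain ⟨P⟩ : Nonempty (Sylow 7 G) := inferInstance
  have hP : Nat.card P = 7 := by
    simp [P.card_eq_multiplicity, hG, ← Nat.primeFactorsList_count_eq]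
  have hindex : P.index = 3 ^ 2 := by
    have := (P : Subgroup G).card_mul_index
    lia
  refine isSolvable_of_sylow_index_eq_prime_pow P hindex fun d hd hmod ↦ ?_
  have := Nat.le_of_dvd (by norm_num) hd
  interval_cases d <;> simp_all [Nat.ModEq]

lemma isSolvable_of_sylow_index_eq_five [Finite G] (P : Sylow 3 G) (hP : P.index = 5) :
    Group.IsSolvable G := by
  have := Fact.mk Nat.prime_five
  refine isSolvable_of_sylow_index_eq_prime_pow (q := 5) (b := 1) P (by simpa) fun d hd hmod ↦ ?_
  have := Nat.le_of_dvd (by norm_num) hd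
  interval_cases d <;> simp_all [Nat.ModEq]

lemma isSolvable_of_card_lt_card_sylow [Finite G] (P : Sylow 3 G) (hP : 9 ≤ Nat.card P)
    (hlt : 23 * Nat.card G < 140 * Nat.card P + 360) : Group.IsSolvable G := by
  have hcard := (P : Subgroup G).card_mul_index
  have hindex : P.index ≤ 7 := by
    refine Nat.lt_succ_iff.1 (Nat.lt_of_mul_lt_mul_left (a := Nat.card P) ?_)
    lia
  have hthree : ¬ 3 ∣ P.index := P.not_dvd_index
  have := isSolvable_of_isPGroup P.isPGroup'
  obtain hfour | hfive | hseven : P.index ≤ 4 ∨ P.index = 5 ∨ P.index = 7 := by lia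
  · exact isSolvable_of_index_le_four (P : Subgroup G) hfour
  · exact isSolvable_of_sylow_index_eq_five P hfive
  · obtain ⟨k, hk⟩ := IsPGroup.iff_card.1 P.isPGroup'
    rw [hseven] at hcard
    have hk_lt : k < 3 := (Nat.pow_lt_pow_iff_right (a := 3) (by norm_num)).1 (by lia)
    exact isSolvable_of_card_eq_sixty_three (by interval_cases k <;> lia)

lemma isSolvable_of_nine_le_card_sylow [Fintype G] (P : Sylow 3 G) (hP : 9 ≤ Nat.card P)
    (hweight : 7 * (Nat.card G : ℤ) < 20 * ∑ g : G, orderWeight g) : Group.IsSolvable G := by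
  obtain ⟨x, hx, hunique⟩ := exists_card_sylow_mem_eq_one hP hweight
  obtain ⟨⟨Q, hxQ⟩, hQ_unique⟩ := Nat.card_eq_one_iff_exists.1 hunique
  have hQ : 9 ≤ Nat.card Q := hP.trans_eq (Nat.card_congr (P.equiv Q).toEquiv)
  obtain ⟨E, hE, hxE, hEQ⟩ | htwo :=
    exists_isElementaryAbelianNine_or_numOrderOf_le_two Q.isPGroup' hxQ hx
  · have hmax (R : Subgroup G) (hR : IsPGroup 3 R) (hER : E ≤ R) : R ≤ Q := by
      obtain ⟨S, hRS⟩ := hR.exists_le_sylow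
      have hSQ : S = Q := congrArg Subtype.val (hQ_unique ⟨S, hRS (hER hxE)⟩)
      exact hSQ ▸ hRS
    have hbound := nine_mul_sum_orderWeight_le hE hEQ hmax
    exact isSolvable_of_card_lt_card_sylow Q hQ (by lia)
  · exact isSolvable_of_numOrderOf_sylow_le_two Q hQ htwo hweight

end LargeSylow

section AverageOrder

variable {G : Type*} [Group G] [Fintype G]

lemma isSolvable_of_card_lt_sum_orderWeight
    (hweight : 7 * (Nat.card G : ℤ) < 20 * ∑ g : G, orderWeight g) : Group.IsSolvable G := by
  obtain ⟨P⟩ : Nonempty (Sylow 3 G) := inferInstance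
  obtain ⟨k, hk⟩ := IsPGroup.iff_card.1 P.isPGroup'
  obtain hk_le | hk_ge : k ≤ 1 ∨ 2 ≤ k := by lia
  · exact isSolvable_of_card_sylow_le_three P
      (hk ▸ Nat.pow_le_pow_right (by norm_num) hk_le) hweight
  · exact isSolvable_of_nine_le_card_sylow P
      (hk ▸ Nat.pow_le_pow_right (n := 3) (by norm_num) hk_ge) hweight

lemma sum_orderWeight_eq : ∑ g : G, orderWeight g =
    4 * (Nat.card G : ℤ) - ∑ g : G, (orderOf g : ℤ) - 2 * numOrderTwo G := by
  have hpoint (g : G) : orderWeight g = 4 - orderOf g - (if orderOf g = 2 then 2 else 0) := by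
    unfold orderWeight
    split_ifs <;> lia
  simp [hpoint, Finset.sum_sub_distrib, Finset.sum_ite, numOrderTwo, mul_comm]

theorem avgOrder_ge_of_few_involutions_general (hns : ¬ Group.IsSolvable G) :
    73 / 20 ≤ avgOrder G + 2 * (numOrderTwo G / Fintype.card G : ℚ) := by
  have hsum := not_lt.1 (mt isSolvable_of_card_lt_sum_orderWeight hns)
  rw [sum_orderWeight_eq, Nat.card_eq_fintype_card] at hsum
  have hsum_rat : 73 * (Fintype.card G : ℚ) ≤
      20 * (∑ g : G, (orderOf g : ℚ) + 2 * numOrderTwo G) := by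
    have : 73 * (Fintype.card G : ℤ) ≤ 20 * (∑ g : G, (orderOf g : ℤ) + 2 * numOrderTwo G) := by
      lia
    exact_mod_cast this
  have hpos : (0 : ℚ) < Fintype.card G := mod_cast Fintype.card_pos
  rw [avgOrder, ← mul_div_assoc, ← add_div, le_div_iff₀ hpos]
  linarith

end AverageOrder

theorem avgOrder_ge_of_few_involutions {G : Type*} [Group G] [Fintype G]
    (hns : ¬ IsSolvable G)
    (h : (numOrderTwo G : ℚ) ≤ (Fintype.card G : ℚ) / 20) :
    71 / 20 ≤ avgOrder G := by
  have hratio : (numOrderTwo G / Fintype.card G : ℚ) ≤ 1 / 20 :=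
    (div_le_iff₀ (mod_cast Fintype.card_pos)).2 (by linarith)
  linarith [avgOrder_ge_of_few_involutions_general hns]
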